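/- arXiv:1609.02068 — 8 statements merged into one kernel-verified Lean document; each statement's English description precedes it below -/
import Mathlib

section
/- For every real number γ > 0 one has ∫₀¹ η_γ(t)/(t(1−t)) dt = π²(1+γ)/(6γ). In particular, for γ = 1 this gives ∫₀¹ (−t·log t − (1−t)·log(1−t))/(t(1−t)) dt = π²/3. -/
open MeasureTheory Real

/-- The γ-Rényi entropy function: for γ ≠ 1, `η_γ(t) = (1-γ)⁻¹ log(t^γ + (1-t)^γ)` on (0,1)
and 0 outside; for γ = 1 it is the von Neumann entropy function. -/
noncomputable def renyiEntropy (γ : ℝ) (t : ℝ) : ℝ :=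
  if 0 < t ∧ t < 1 then
    if γ = 1 then -t * Real.log t - (1 - t) * Real.log (1 - t)
    else (1 - γ)⁻¹ * Real.log (t ^ γ + (1 - t) ^ γ)
  else 0

lemma aux_D : ∫ x in Set.Ioi (0:ℝ), -log (1 - exp (-x)) = π ^ 2 / 6 := by
  have hterm : ∀ n : ℕ, ∫ x in Set.Ioi (0:ℝ), (exp (-x)) ^ (n+1) / ((n:ℝ)+1) = 1 / ((n:ℝ)+1)^2 := by
    intro n
    have hn : (0:ℝ) < (n:ℝ) + 1 := by positivity
    have h := integral_exp_mul_Ioi (a := -((n:ℝ)+1)) (by linarith) 0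
    rw [integral_div]
    have : ∀ x : ℝ, (exp (-x)) ^ (n+1) = exp (-((n:ℝ)+1) * x) := by
      intro x
      rw [← exp_nat_mul]; congr 1; push_cast; ring
    simp_rw [this]
    rw [h]
    rw [mul_zero, exp_zero, neg_div_neg_eq]
    field_simp
  have hint : ∀ n : ℕ, Integrable (fun x : ℝ => (exp (-x)) ^ (n+1) / ((n:ℝ)+1))
      (volume.restrict (Set.Ioi (0:ℝ))) := by
    intro n
    have hn : (0:ℝ) < (n:ℝ) + 1 := by positivity
    have h := exp_neg_integrableOn_Ioi 0 hn
    have : ∀ x : ℝ, (exp (-x)) ^ (n+1) = exp (-((n:ℝ)+1) * x) := by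
      intro x
      rw [← exp_nat_mul]; congr 1; push_cast; ring
    simp_rw [this]
    exact h.div_const _
  have hz : HasSum (fun n : ℕ => 1 / ((n:ℝ)+1)^2) (π^2/6) := by
    have := (hasSum_nat_add_iff (f := fun n : ℕ => (1:ℝ) / (n:ℝ)^2) (g := π^2/6) 1).2
      (by simpa using hasSum_zeta_two)
    simpa using this
  have hs := hasSum_integral_of_summable_integral_norm hint (by
    have : ∀ n : ℕ, ∀ x : ℝ, ‖(exp (-x)) ^ (n+1) / ((n:ℝ)+1)‖ = (exp (-x)) ^ (n+1) / ((n:ℝ)+1) := by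
      intro n x
      rw [Real.norm_of_nonneg]; positivity
    simp_rw [this, hterm]
    exact hz.summable)
  simp_rw [hterm] at hs
  rw [← hs.unique hz]
  refine setIntegral_congr_fun measurableSet_Ioi ?_
  intro x hx
  have hx : 0 < x := hx
  refine (Real.hasSum_pow_div_log_of_abs_lt_one ?_).tsum_eq.symm
  rw [abs_of_pos (exp_pos _)]
  simpa using hx

lemma aux_Dint : IntegrableOn (fun x : ℝ => -log (1 - exp (-x))) (Set.Ioi 0) := by
  by_contra h
  have := integral_undef h
  rw [aux_D] at this
  have : 0 < π ^ 2 / 6 := by positivity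
  linarith

lemma aux_D2 : ∫ x in Set.Ioi (0:ℝ), -log (1 - exp (-(2 * x))) = π ^ 2 / 12 := by
  have := integral_comp_mul_left_Ioi (fun x : ℝ => -log (1 - exp (-x))) 0 (b := 2) (by norm_num)
  rw [mul_zero, aux_D] at this
  rw [this, smul_eq_mul]; ring

lemma aux_D2int : IntegrableOn (fun x : ℝ => -log (1 - exp (-(2 * x)))) (Set.Ioi 0) := by
  by_contra h
  have := integral_undef h
  rw [aux_D2] at this
  have : 0 < π ^ 2 / 12 := by positivity
  linarith

lemma aux_C : ∫ x in Set.Ioi (0:ℝ), log (1 + exp (-x)) = π ^ 2 / 12 := by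
  have h : ∫ x in Set.Ioi (0:ℝ), log (1 + exp (-x)) =
      ∫ x in Set.Ioi (0:ℝ), (-log (1 - exp (-x)) - -log (1 - exp (-(2 * x)))) := by
    refine setIntegral_congr_fun measurableSet_Ioi ?_
    intro x hx
    have hx : 0 < x := hx
    have h1 : exp (-x) < 1 := by simpa using hx
    have h2 : exp (-(2 * x)) = exp (-x) * exp (-x) := by rw [← exp_add]; congr 1; ring
    have h0 := exp_pos (-x)
    have h3 : 1 - exp (-(2 * x)) = (1 - exp (-x)) * (1 + exp (-x)) := by rw [h2]; ring
    simp only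
    rw [h3, log_mul (by linarith) (by linarith)]
    ring
  rw [h, integral_sub aux_Dint aux_D2int, aux_D, aux_D2]
  ring

lemma aux_Cg (g : ℝ) (hg : 0 < g) :
    ∫ x in Set.Ioi (0:ℝ), log (1 + exp (-(g * x))) = g⁻¹ * (π ^ 2 / 12) := by
  have := integral_comp_mul_left_Ioi (fun x : ℝ => log (1 + exp (-x))) 0 (b := g) hg
  rw [mul_zero, aux_C] at this
  rw [this, smul_eq_mul]

lemma aux_Cgint (g : ℝ) (hg : 0 < g) :
    IntegrableOn (fun x : ℝ => log (1 + exp (-(g * x)))) (Set.Ioi 0) := by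
  by_contra h
  have := integral_undef h
  rw [aux_Cg g hg] at this
  have : 0 < g⁻¹ * (π ^ 2 / 12) := by positivity
  linarith

lemma aux_main (g : ℝ) (hg : 0 < g) :
    ∫ x : ℝ, (log (1 + exp (-(g * x))) - g * log (1 + exp (-x))) =
      2 * ((g⁻¹ - g) * (π ^ 2 / 12)) := by
  have key : ∀ y : ℝ, log (1 + exp (-y)) = - y + log (1 + exp y) := by
    intro y
    have : 1 + exp (-y) = exp (-y) * (1 + exp y) := by
      rw [mul_add, ← exp_add]; simp; ring
    rw [this, log_mul (exp_pos _).ne' (by positivity), log_exp]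
  have h : ∀ x : ℝ, log (1 + exp (-(g * x))) - g * log (1 + exp (-x)) =
      (fun x : ℝ => log (1 + exp (-(g * x))) - g * log (1 + exp (-x))) |x| := by
    intro x
    rcases abs_cases x with ⟨h, _⟩ | ⟨h, _⟩
    · simp only [h]
    · simp only [h]
      rw [key (g * x), key x]
      simp only [mul_neg, neg_neg]
      ring
  rw [integral_congr_ae (Filter.Eventually.of_forall h), 
    integral_comp_abs (f := fun x : ℝ => log (1 + exp (-(g * x))) - g * log (1 + exp (-x)))]
  congr 1
  have i1 := aux_Cgint 1 one_pos
  simp only [one_mul] at i1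
  rw [integral_sub (aux_Cgint g hg) (i1.const_mul g), aux_Cg g hg, integral_const_mul, aux_C]
  ring

lemma aux_sub (F : ℝ → ℝ) :
    ∫ t in (0:ℝ)..1, F t / (t * (1 - t)) = ∫ x : ℝ, F ((1 + exp (-x))⁻¹) := by
  have himg : (fun x : ℝ => (1 + exp (-x))⁻¹) '' Set.univ = Set.Ioo 0 1 := by
    ext t
    constructor
    · rintro ⟨x, -, rfl⟩
      have := exp_pos (-x)
      exact ⟨by positivity, inv_lt_one_of_one_lt₀ (by linarith)⟩
    · rintro ⟨h0, h1⟩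
      refine ⟨-log (t⁻¹ - 1), trivial, ?_⟩
      have : 0 < t⁻¹ - 1 := by
        have := (one_lt_inv₀ h0).2 h1
        linarith
      simp only [neg_neg]
      rw [exp_log this]
      simp
  rw [intervalIntegral.integral_of_le zero_le_one, integral_Ioc_eq_integral_Ioo, ← himg,
    integral_image_eq_integral_abs_deriv_smul (f' := fun x => exp (-x) / (1 + exp (-x))^2)
      MeasurableSet.univ]
  · rw [setIntegral_univ]
    refine integral_congr_ae (Filter.Eventually.of_forall ?_)
    intro x
    have := exp_pos (-x)
    simp only [smul_eq_mul]
    rw [abs_of_pos (by positivity)]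
    have h2 : (1 + exp (-x))⁻¹ * (1 - (1 + exp (-x))⁻¹) = exp (-x) / (1 + exp (-x))^2 := by
      field_simp
      ring
    rw [h2]
    field_simp
  · intro x _
    have := exp_pos (-x)
    have h := (((hasDerivAt_neg x).exp.const_add 1).inv (by positivity : 1 + exp (-x) ≠ 0))
    refine HasDerivAt.hasDerivWithinAt ?_
    have e : exp (-x) / (1 + exp (-x))^2 = -(exp (-x) * -1) / (1 + exp (-x))^2 := by ring
    rw [e]
    exact h
  · intro x _ y _ h
    simpa using h

lemma aux_ne (g : ℝ) (hg : 0 < g) (h1 : g ≠ 1) :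
    ∫ t in (0:ℝ)..1, renyiEntropy g t / (t * (1 - t)) = π ^ 2 * (1 + g) / (6 * g) := by
  rw [aux_sub]
  have : ∀ x : ℝ, renyiEntropy g ((1 + exp (-x))⁻¹) =
      (1 - g)⁻¹ * (log (1 + exp (-(g * x))) - g * log (1 + exp (-x))) := by
    intro x
    have he := exp_pos (-x)
    have hc : 0 < (1 + exp (-x))⁻¹ ∧ (1 + exp (-x))⁻¹ < 1 :=
      ⟨by positivity, inv_lt_one_of_one_lt₀ (by linarith)⟩
    rw [renyiEntropy, if_pos hc, if_neg h1]
    have h2 : 1 - (1 + exp (-x))⁻¹ = exp (-x) * (1 + exp (-x))⁻¹ := by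
      field_simp
      ring
    have h3 : exp (-(g * x)) = exp (-x) ^ g := by
      rw [← exp_mul]; congr 1; ring
    rw [h2, mul_rpow he.le hc.1.le, ← h3]
    have h4 : ((1 + exp (-x))⁻¹) ^ g + exp (-(g * x)) * ((1 + exp (-x))⁻¹) ^ g
      = (1 + exp (-(g * x))) * ((1 + exp (-x))⁻¹) ^ g := by ring
    rw [h4, log_mul (by positivity) (by positivity), log_rpow hc.1, log_inv]
    ring
  simp_rw [this]
  rw [integral_const_mul, aux_main g hg]
  have : 1 - g ≠ 0 := sub_ne_zero.2 (Ne.symm h1)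
  field_simp
  ring

lemma aux_log : ∫ t in (0:ℝ)..1, -log (1 - t) / t = π ^ 2 / 6 := by
  have himg : (fun x : ℝ => exp (-x)) '' Set.Ioi 0 = Set.Ioo 0 1 := by
    ext t
    constructor
    · rintro ⟨x, hx, rfl⟩
      have hx : 0 < x := hx
      exact ⟨exp_pos _, by simpa using hx⟩
    · rintro ⟨h0, h1⟩
      exact ⟨-log t, by simpa using log_neg h0 h1, by simp [exp_log h0]⟩
  rw [intervalIntegral.integral_of_le zero_le_one, integral_Ioc_eq_integral_Ioo, ← himg,
    integral_image_eq_integral_abs_deriv_smul (f' := fun x => exp (-x) * (-1))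
      measurableSet_Ioi, ← aux_D]
  · refine setIntegral_congr_fun measurableSet_Ioi ?_
    intro x _
    have := exp_pos (-x)
    simp only [smul_eq_mul, mul_neg, mul_one, abs_neg]
    rw [abs_of_pos this]
    field_simp
  · intro x _
    exact (hasDerivAt_neg x).exp.hasDerivWithinAt
  · intro x _ y _ h
    simpa using h

lemma aux_log' : ∫ t in (0:ℝ)..1, -log t / (1 - t) = π ^ 2 / 6 := by
  have := intervalIntegral.integral_comp_sub_left (a := 0) (b := 1)
    (fun t : ℝ => -log (1 - t) / t) 1
  simp only [sub_sub_cancel, sub_self, sub_zero] at this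
  rw [this, aux_log]

lemma aux_one : ∫ t in (0:ℝ)..1, (-t * Real.log t - (1 - t) * Real.log (1 - t)) / (t * (1 - t))
      = π ^ 2 / 3 := by
  have hp : 0 < π ^ 2 / 6 := by positivity
  have i1 : IntervalIntegrable (fun t : ℝ => -log (1 - t) / t) volume 0 1 := by
    by_contra h
    have := intervalIntegral.integral_undef h
    rw [aux_log] at this
    linarith
  have i2 : IntervalIntegrable (fun t : ℝ => -log t / (1 - t)) volume 0 1 := by
    by_contra h
    have := intervalIntegral.integral_undef h
    rw [aux_log'] at this
    linarith
  have : ∫ t in (0:ℝ)..1, (-t * Real.log t - (1 - t) * Real.log (1 - t)) / (t * (1 - t)) =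
      ∫ t in (0:ℝ)..1, (-log (1 - t) / t + -log t / (1 - t)) := by
    refine intervalIntegral.integral_congr ?_
    intro t _
    simp only
    by_cases h0 : t = 0
    · simp [h0]
    by_cases h1 : t = 1
    · simp [h1]
    have : 1 - t ≠ 0 := sub_ne_zero.2 (Ne.symm h1)
    field_simp
    ring
  rw [this, intervalIntegral.integral_add i1 i2, aux_log, aux_log']
  ring

theorem renyi_entropy_integral :
    (∀ γ : ℝ, 0 < γ →
      ∫ t in (0:ℝ)..1, renyiEntropy γ t / (t * (1 - t)) = π ^ 2 * (1 + γ) / (6 * γ)) ∧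
    ∫ t in (0:ℝ)..1, (-t * Real.log t - (1 - t) * Real.log (1 - t)) / (t * (1 - t))
      = π ^ 2 / 3 := by
  refine ⟨?_, aux_one⟩
  intro g hg
  by_cases h1 : g = 1
  · subst h1
    have : ∫ t in (0:ℝ)..1, renyiEntropy 1 t / (t * (1 - t)) = π ^ 2 / 3 := by
      rw [← aux_one]
      refine intervalIntegral.integral_congr ?_
      intro t ht
      rw [Set.uIcc_of_le zero_le_one] at ht
      simp only
      by_cases h0 : t = 0
      · simp [h0]
      by_cases h1 : t = 1
      · simp [h1]
      rw [renyiEntropy, if_pos ⟨lt_of_le_of_ne ht.1 (Ne.symm h0), lt_of_le_of_ne ht.2 h1⟩,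
        if_pos rfl]
    rw [this]
    ring
  · exact aux_ne g hg h1
end

section
/- If f : ℝ → ℝ is Lipschitz with Lipschitz constant L, then the integral defining U(f) converges absolutely and |U(f)| ≤ 2L. -/
open MeasureTheory

/-- If `f : ℝ → ℝ` is Lipschitz with Lipschitz constant `L`, then the integral defining
`U(f) = ∫₀¹ [f(1−t) − (1−t)f(1) − tf(0)]/(t(1−t)) dt` converges absolutely and
`|U(f)| ≤ 2L`. -/
theorem U_bound_of_lipschitz (f : ℝ → ℝ) (L : ℝ)
    (hL : ∀ x y : ℝ, |f x - f y| ≤ L * |x - y|) :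
    IntegrableOn (fun t : ℝ => (f (1 - t) - (1 - t) * f 1 - t * f 0) / (t * (1 - t)))
      (Set.Ioo 0 1) ∧
    |∫ t in Set.Ioo (0:ℝ) 1, (f (1 - t) - (1 - t) * f 1 - t * f 0) / (t * (1 - t))|
      ≤ 2 * L := by
  have hcont : Continuous f := by
    have h : LipschitzWith (Real.toNNReal L) f := by
      apply LipschitzWith.of_dist_le_mul
      intro x y
      rw [Real.dist_eq, Real.dist_eq]
      exact (hL x y).trans (mul_le_mul_of_nonneg_right (Real.le_coe_toNNReal L) (abs_nonneg _))
    exact h.continuous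
  have hf : Measurable f := hcont.measurable
  have hbound : ∀ t ∈ Set.Ioo (0:ℝ) 1,
      ‖(f (1 - t) - (1 - t) * f 1 - t * f 0) / (t * (1 - t))‖ ≤ 2 * L := by
    rintro t ⟨h0, h1⟩
    have h1' : 0 < 1 - t := by linarith
    have hp : 0 < t * (1 - t) := mul_pos h0 h1'
    rw [Real.norm_eq_abs, abs_div, abs_of_pos hp, div_le_iff₀ hp]
    have a := hL (1 - t) 1
    have b := hL (1 - t) 0
    rw [show (1 - t - 1 : ℝ) = -t by ring, abs_neg, abs_of_pos h0] at a
    rw [sub_zero, abs_of_pos h1'] at b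
    rw [abs_le] at a b ⊢
    have a1 := mul_le_mul_of_nonneg_left a.1 h1'.le
    have a2 := mul_le_mul_of_nonneg_left a.2 h1'.le
    have b1 := mul_le_mul_of_nonneg_left b.1 h0.le
    have b2 := mul_le_mul_of_nonneg_left b.2 h0.le
    constructor <;> linarith
  have hvol : volume (Set.Ioo (0:ℝ) 1) < ⊤ := measure_Ioo_lt_top
  constructor
  · refine IntegrableOn.of_bound hvol ?_ (2 * L) ?_
    · apply Measurable.aestronglyMeasurable
      fun_prop
    · exact (ae_restrict_iff' measurableSet_Ioo).2 (Filter.Eventually.of_forall hbound)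
  · have h := norm_setIntegral_le_of_norm_le_const hvol hbound
    simpa using h
end

section
/- Let γ > 0, t₀ ∈ ℝ and 0 < R ≤ 1. Suppose f ∈ C(ℝ) ∩ C¹(ℝ∖{t₀}) is supported in [t₀−R, t₀+R] and ⫴f⫴₁ < ∞. Then the integral defining U(f) converges absolutely and there is a constant C, depending only on γ (and not on f, t₀ or R), such that |U(f)| ≤ C·R^{γ/2}·⫴f⫴₁. -/
open MeasureTheory

lemma half_holder (g : ℝ → ℝ) (N β : ℝ) (hN : 0 ≤ N) (hβ : 0 < β) (hβ1 : β ≤ 1)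
    (hc : Continuous g) (hd : ∀ t, 0 < t → DifferentiableAt ℝ g t)
    (hb : ∀ t, 0 < t → |deriv g t| ≤ N * t ^ (β - 1)) (x y : ℝ) (hx : 0 ≤ x) (hxy : x ≤ y) :
    |g y - g x| ≤ N / β * (y - x) ^ β := by
  have hder : ∀ t : ℝ, 0 < t →
      HasDerivAt (fun t : ℝ => N / β * t ^ β) (N * t ^ (β - 1)) t := by
    intro t ht
    have := (Real.hasDerivAt_rpow_const (x := t) (p := β) (Or.inl ht.ne')).const_mul (N / β)
    rw [← mul_assoc, div_mul_cancel₀ N hβ.ne'] at this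
    exact this
  have hcp : Continuous (fun t : ℝ => N / β * t ^ β) :=
    continuous_const.mul (Real.continuous_rpow_const hβ.le)
  have m1 : MonotoneOn (fun t : ℝ => N / β * t ^ β + g t) (Set.Ici 0) := by
    apply monotoneOn_of_deriv_nonneg (convex_Ici 0) (hcp.add hc).continuousOn
    · intro t ht
      rw [interior_Ici] at ht
      exact ((hder t ht).add (hd t ht).hasDerivAt).differentiableAt.differentiableWithinAt
    · intro t ht
      rw [interior_Ici] at ht
      rw [((hder t ht).add (hd t ht).hasDerivAt).deriv]
      have := neg_abs_le (deriv g t)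
      linarith [hb t ht]
  have m2 : MonotoneOn (fun t : ℝ => N / β * t ^ β - g t) (Set.Ici 0) := by
    apply monotoneOn_of_deriv_nonneg (convex_Ici 0) (hcp.sub hc).continuousOn
    · intro t ht
      rw [interior_Ici] at ht
      exact ((hder t ht).sub (hd t ht).hasDerivAt).differentiableAt.differentiableWithinAt
    · intro t ht
      rw [interior_Ici] at ht
      rw [((hder t ht).sub (hd t ht).hasDerivAt).deriv]
      have := le_abs_self (deriv g t)
      linarith [hb t ht]
  have a1 := m1 hx (hx.trans hxy) hxy
  have a2 := m2 hx (hx.trans hxy) hxy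
  simp only at a1 a2
  have hs := Real.rpow_add_le_add_rpow hx (sub_nonneg.2 hxy) hβ.le hβ1
  rw [add_sub_cancel] at hs
  have h3 := mul_le_mul_of_nonneg_left hs (div_nonneg hN hβ.le)
  rw [mul_add] at h3
  rw [abs_le]; constructor <;> linarith

lemma full_holder (f : ℝ → ℝ) (t₀ N β : ℝ) (hN : 0 ≤ N) (hβ : 0 < β) (hβ1 : β ≤ 1)
    (hc : Continuous f) (hd : ∀ t, t ≠ t₀ → DifferentiableAt ℝ f t)
    (hb : ∀ t, t ≠ t₀ → |deriv f t| ≤ N * |t - t₀| ^ (β - 1)) (x y : ℝ) (hxy : x ≤ y) :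
    |f y - f x| ≤ 2 * (N / β) * (y - x) ^ β := by
  have hK : 0 ≤ N / β := div_nonneg hN hβ.le
  have R := half_holder (fun t => f (t₀ + t)) N β hN hβ hβ1 (by fun_prop)
    (fun t ht => by
      have := hd (t₀ + t) (by linarith [ht] : t₀ + t > t₀).ne'
      exact this.comp t (by fun_prop))
    (fun t ht => by
      rw [deriv_comp_const_add]
      have := hb (t₀ + t) (by linarith [ht] : t₀ + t > t₀).ne'
      rwa [add_sub_cancel_left, abs_of_pos ht] at this)
  have L := half_holder (fun t => f (t₀ - t)) N β hN hβ hβ1 (by fun_prop)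
    (fun t ht => by
      have := hd (t₀ - t) (by linarith [ht] : t₀ - t < t₀).ne
      exact this.comp t (by fun_prop))
    (fun t ht => by
      rw [deriv_comp_const_sub, abs_neg]
      have := hb (t₀ - t) (by linarith [ht] : t₀ - t < t₀).ne
      rwa [sub_sub_cancel_left, abs_neg, abs_of_pos ht] at this)
  have hp : 0 ≤ N / β * (y - x) ^ β := mul_nonneg hK (Real.rpow_nonneg (sub_nonneg.2 hxy) _)
  rcases le_total t₀ x with h | h
  · have := R (x - t₀) (y - t₀) (by linarith) (by linarith)
    simp only [add_sub_cancel, sub_sub_sub_cancel_right] at this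
    linarith
  rcases le_total y t₀ with h' | h'
  · have := L (t₀ - y) (t₀ - x) (by linarith) (by linarith)
    simp only [sub_sub_cancel, sub_sub_sub_cancel_left] at this
    rw [abs_sub_comm] at this
    linarith
  · have r := R 0 (y - t₀) le_rfl (by linarith)
    have l := L 0 (t₀ - x) le_rfl (by linarith)
    simp only [add_sub_cancel, sub_sub_cancel, sub_zero, add_zero] at r l
    have e1 : N / β * (y - t₀) ^ β ≤ N / β * (y - x) ^ β := by gcongr
    have e2 : N / β * (t₀ - x) ^ β ≤ N / β * (y - x) ^ β := by gcongr
    rw [abs_sub_comm] at l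
    have := abs_sub_le (f y) (f t₀) (f x)
    linarith

lemma interp (f : ℝ → ℝ) (γ t₀ R N : ℝ) (hγ : 0 < γ) (hR : 0 < R) (hR1 : R ≤ 1)
    (hc : Continuous f) (hd : ∀ t, t ≠ t₀ → DifferentiableAt ℝ f t)
    (hs : ∀ t : ℝ, t ∉ Set.Icc (t₀ - R) (t₀ + R) → f t = 0)
    (h0 : ∀ t : ℝ, t ≠ t₀ → |f t| ≤ N * |t - t₀| ^ γ)
    (h1 : ∀ t : ℝ, t ≠ t₀ → |deriv f t| ≤ N * |t - t₀| ^ (γ - 1)) (hN : 0 ≤ N)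
    (x y : ℝ) (hxy : x ≤ y) :
    |f y - f x| ≤ 2 / min γ 1 * (N * R ^ (γ / 2)) * (y - x) ^ (min γ 1 / 2) := by
  set β := min γ 1 with hβd
  have hβ : 0 < β := lt_min hγ one_pos
  have hβ1 : β ≤ 1 := min_le_right _ _
  have hβγ : β ≤ γ := min_le_left _ _
  have hin : ∀ t, t ∈ Set.Icc (t₀ - R) (t₀ + R) → |t - t₀| ≤ R := by
    intro t ht
    rw [abs_le]; constructor <;> linarith [ht.1, ht.2]
  have hb : ∀ t, t ≠ t₀ → |deriv f t| ≤ N * |t - t₀| ^ (β - 1) := by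
    intro t ht
    by_cases hm : t ∈ Set.Icc (t₀ - R) (t₀ + R)
    · refine (h1 t ht).trans (mul_le_mul_of_nonneg_left ?_ hN)
      exact Real.rpow_le_rpow_of_exponent_ge (abs_pos.2 (sub_ne_zero.2 ht))
        ((hin t hm).trans hR1) (by linarith)
    · have : f =ᶠ[nhds t] fun _ => 0 := by
        filter_upwards [isClosed_Icc.isOpen_compl.mem_nhds hm] with z hz using hs z hz
      rw [this.deriv_eq]
      simp only [deriv_const, abs_zero]
      positivity
  have hH := full_holder f t₀ N β hN hβ hβ1 hc hd hb x y hxy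
  have hsup : ∀ t, |f t| ≤ N * R ^ γ := by
    have hcl : IsClosed {t | |f t| ≤ N * R ^ γ} := isClosed_le (by fun_prop) (by fun_prop)
    have hsub : ({t₀}ᶜ : Set ℝ) ⊆ {t | |f t| ≤ N * R ^ γ} := by
      intro t ht
      by_cases hm : t ∈ Set.Icc (t₀ - R) (t₀ + R)
      · refine (h0 t ht).trans (mul_le_mul_of_nonneg_left ?_ hN)
        exact Real.rpow_le_rpow (abs_nonneg _) (hin t hm) hγ.le
      · simp only [Set.mem_ofPred_eq, hs t hm, abs_zero]
        positivity
    intro t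
    exact closure_minimal hsub hcl (dense_compl_singleton t₀ t)
  have hD : |f y - f x| ≤ 2 * (N * R ^ γ) := by
    have := abs_sub (f y) (f x)
    linarith [hsup x, hsup y]
  have hyx : 0 ≤ y - x := sub_nonneg.2 hxy
  have e1 : (R ^ (γ / 2)) ^ 2 = R ^ γ := by
    rw [← Real.rpow_mul_natCast hR.le]; norm_num
  have e2 : ((y - x) ^ (β / 2)) ^ 2 = (y - x) ^ β := by
    rw [← Real.rpow_mul_natCast hyx]; norm_num
  apply abs_le_of_sq_le_sq' _ (by positivity) |>.2
  have hm := mul_le_mul hD hH (abs_nonneg _) (by positivity)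
  rw [mul_pow, mul_pow, mul_pow, e1, e2, sq]
  refine hm.trans ?_
  have hq : 4 / β ≤ (2 / β) ^ 2 := by
    rw [div_pow, div_le_div_iff₀ hβ (by positivity)]
    nlinarith
  calc 2 * (N * R ^ γ) * (2 * (N / β) * (y - x) ^ β)
      = (4 / β) * (N ^ 2 * R ^ γ * (y - x) ^ β) := by ring
    _ ≤ (2 / β) ^ 2 * (N ^ 2 * R ^ γ * (y - x) ^ β) := by gcongr
    _ = _ := by ring

/-- Let `γ > 0`, `t₀ ∈ ℝ`, `0 < R ≤ 1`. If `f` is continuous on `ℝ`, `C¹` away from `t₀`,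
supported in `[t₀ − R, t₀ + R]`, and `⫴f⫴₁ ≤ N` (i.e. `|f(t)| ≤ N|t−t₀|^γ` and
`|f'(t)| ≤ N|t−t₀|^{γ−1}` for `t ≠ t₀`), then the integral defining
`U(f) = ∫₀¹ [f(1−t) − (1−t)f(1) − tf(0)]/(t(1−t)) dt` converges absolutely and
`|U(f)| ≤ C R^{γ/2} N` with `C` depending only on `γ`. -/
theorem U_bound_singular (γ : ℝ) (hγ : 0 < γ) :
    ∃ C : ℝ, ∀ (f : ℝ → ℝ) (t₀ R N : ℝ), 0 < R → R ≤ 1 →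
      Continuous f →
      (∀ t : ℝ, t ≠ t₀ → DifferentiableAt ℝ f t) →
      ContinuousOn (deriv f) {t₀}ᶜ →
      (∀ t : ℝ, t ∉ Set.Icc (t₀ - R) (t₀ + R) → f t = 0) →
      (∀ t : ℝ, t ≠ t₀ → |f t| ≤ N * |t - t₀| ^ γ) →
      (∀ t : ℝ, t ≠ t₀ → |deriv f t| ≤ N * |t - t₀| ^ (γ - 1)) →
      IntegrableOn (fun t : ℝ => (f (1 - t) - (1 - t) * f 1 - t * f 0) / (t * (1 - t)))
        (Set.Ioo 0 1) ∧
      |∫ t in Set.Ioo (0:ℝ) 1, (f (1 - t) - (1 - t) * f 1 - t * f 0) / (t * (1 - t))|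
        ≤ C * R ^ (γ / 2) * N := by
  set a := min γ 1 / 2 - 1 with ha
  have hβ : 0 < min γ 1 := lt_min hγ one_pos
  have i1 : IntervalIntegrable (fun t : ℝ => t ^ a) volume 0 1 :=
    intervalIntegral.intervalIntegrable_rpow' (by rw [ha]; linarith)
  have i2 : IntervalIntegrable (fun t : ℝ => (1 - t) ^ a) volume 0 1 := by
    have := (i1.comp_sub_left 1).symm
    simpa using this
  have i3 : IntegrableOn (fun t : ℝ => t ^ a + (1 - t) ^ a) (Set.Ioo 0 1) :=
    ((intervalIntegrable_iff_integrableOn_Ioo_of_le zero_le_one).1 i1).add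
      ((intervalIntegrable_iff_integrableOn_Ioo_of_le zero_le_one).1 i2)
  refine ⟨2 / min γ 1 * ∫ t in Set.Ioo (0:ℝ) 1, (t ^ a + (1 - t) ^ a), ?_⟩
  intro f t₀ R N hR hR1 hc hd _ hs h0 h1
  have hN : 0 ≤ N := by
    have := h0 (t₀ + 1) (by simp)
    simp only [add_sub_cancel_left, abs_one, Real.one_rpow, mul_one] at this
    exact (abs_nonneg _).trans this
  have key := interp f γ t₀ R N hγ hR hR1 hc hd hs h0 h1 hN
  set M := 2 / min γ 1 * (N * R ^ (γ / 2)) with hM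
  have hbd : ∀ t ∈ Set.Ioo (0:ℝ) 1,
      ‖(f (1 - t) - (1 - t) * f 1 - t * f 0) / (t * (1 - t))‖ ≤ M * (t ^ a + (1 - t) ^ a) := by
    intro t ht
    have t0 : 0 < t := ht.1
    have t1 : 0 < 1 - t := sub_pos.2 ht.2
    have e : (f (1 - t) - (1 - t) * f 1 - t * f 0) / (t * (1 - t))
        = (f (1 - t) - f 0) / (1 - t) - (f 1 - f (1 - t)) / t := by
      field_simp
      ring
    have k1 := key 0 (1 - t) t1.le
    have k2 := key (1 - t) 1 (by linarith)
    rw [sub_zero] at k1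
    rw [sub_sub_cancel] at k2
    rw [e, Real.norm_eq_abs]
    refine (abs_sub _ _).trans ?_
    rw [abs_div, abs_div, abs_of_pos t0, abs_of_pos t1, ha, Real.rpow_sub_one t0.ne',
      Real.rpow_sub_one t1.ne']
    have l1 := div_le_div_of_nonneg_right k1 t1.le
    have l2 := div_le_div_of_nonneg_right k2 t0.le
    rw [mul_add, ← mul_div_assoc, ← mul_div_assoc]
    linarith
  have hae : ∀ᵐ t ∂(volume.restrict (Set.Ioo (0:ℝ) 1)),
      ‖(f (1 - t) - (1 - t) * f 1 - t * f 0) / (t * (1 - t))‖ ≤ M * (t ^ a + (1 - t) ^ a) :=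
    (ae_restrict_iff' measurableSet_Ioo).2 (Filter.Eventually.of_forall hbd)
  have i4 : IntegrableOn (fun t : ℝ => M * (t ^ a + (1 - t) ^ a)) (Set.Ioo 0 1) :=
    i3.const_mul M
  refine ⟨Integrable.mono' i4 ?_ hae, ?_⟩
  · have := hc.measurable
    apply Measurable.aestronglyMeasurable
    fun_prop
  · have := norm_integral_le_of_norm_le i4 hae
    rw [Real.norm_eq_abs, integral_const_mul] at this
    refine this.trans (le_of_eq ?_)
    rw [hM]; ring
end

section
/- Let γ > 0, t₀ ∈ ℝ and 0 < R ≤ 1. Suppose f ∈ C(ℝ) ∩ C¹(ℝ∖{t₀}) is supported in [t₀−R, t₀+R] and ⫴f⫴₁ < ∞. Then f is Hölder continuous with exponent κ = min{γ, 1}: for all t₁, t₂ ∈ ℝ one has |f(t₁) − f(t₂)| ≤ 2·⫴f⫴₁·|t₁−t₂|^κ. -/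
/-- Let `γ > 0`, `t₀ ∈ ℝ`, `0 < R ≤ 1`. If `f` is continuous on `ℝ`, `C¹` away from `t₀`,
supported in `[t₀ − R, t₀ + R]`, and `⫴f⫴₁ ≤ N` (i.e. `|f(t)| ≤ N|t−t₀|^γ` and
`|f'(t)| ≤ N|t−t₀|^{γ−1}` for `t ≠ t₀`), then `f` is Hölder continuous with exponent
`κ = min γ 1`: `|f(t₁) − f(t₂)| ≤ 2N|t₁ − t₂|^κ` for all `t₁, t₂`. -/
theorem holder_of_singular_norm (γ : ℝ) (hγ : 0 < γ) (f : ℝ → ℝ) (t₀ R N : ℝ)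
    (hR0 : 0 < R) (hR1 : R ≤ 1)
    (hcont : Continuous f)
    (hdiff : ∀ t : ℝ, t ≠ t₀ → DifferentiableAt ℝ f t)
    (hderiv_cont : ContinuousOn (deriv f) {t₀}ᶜ)
    (hsupp : ∀ t : ℝ, t ∉ Set.Icc (t₀ - R) (t₀ + R) → f t = 0)
    (hf0 : ∀ t : ℝ, t ≠ t₀ → |f t| ≤ N * |t - t₀| ^ γ)
    (hf1 : ∀ t : ℝ, t ≠ t₀ → |deriv f t| ≤ N * |t - t₀| ^ (γ - 1)) :
    ∀ t₁ t₂ : ℝ, |f t₁ - f t₂| ≤ 2 * N * |t₁ - t₂| ^ min γ 1 := by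
  have hN : 0 ≤ N := by
    have h := hf0 (t₀ + 1) (by simp)
    simp at h
    exact (abs_nonneg _).trans h
  have hft₀ : f t₀ = 0 := by
    have hg : Continuous fun t : ℝ => N * |t - t₀| ^ γ :=
      continuous_const.mul (((continuous_id.sub continuous_const).abs).rpow_const
        (fun _ => Or.inr hγ.le))
    have h1 : Filter.Tendsto (fun t => |f t|) (nhdsWithin t₀ {t₀}ᶜ) (nhds |f t₀|) :=
      hcont.abs.continuousAt.tendsto.mono_left nhdsWithin_le_nhds
    have h2 := (hg.continuousAt (x := t₀)).tendsto.mono_left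
      (nhdsWithin_le_nhds (s := {t₀}ᶜ))
    have h3 := le_of_tendsto_of_tendsto h1 h2
      (by filter_upwards [self_mem_nhdsWithin] with t ht using hf0 t ht)
    simp [Real.zero_rpow hγ.ne'] at h3
    exact h3
  have hf0' : ∀ t : ℝ, |f t| ≤ N * |t - t₀| ^ γ := by
    intro t
    by_cases h : t = t₀
    · subst h; simp [hft₀, Real.zero_rpow hγ.ne']
    · exact hf0 t h
  have key : ∀ t₁ t₂ : ℝ, t₁ < t₂ → |f t₁ - f t₂| ≤ 2 * N * |t₁ - t₂| ^ min γ 1 := by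
    intro a b hab
    have hd : |a - b| = b - a := by rw [abs_sub_comm, abs_of_pos (by linarith)]
    have hd0 : 0 < b - a := by linarith
    have mvt : t₀ ∉ Set.Ioo a b → ∃ c ∈ Set.Ioo a b, c ≠ t₀ ∧
        |f a - f b| = |deriv f c| * (b - a) := by
      intro h
      have hne : ∀ c ∈ Set.Ioo a b, c ≠ t₀ := fun c hc e => h (e ▸ hc)
      obtain ⟨c, hc, e⟩ := exists_deriv_eq_slope f hab hcont.continuousOn
        (fun x hx => (hdiff x (hne x hx)).differentiableWithinAt)
      refine ⟨c, hc, hne c hc, ?_⟩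
      rw [e, abs_div, abs_of_pos hd0, div_mul_cancel₀ _ hd0.ne', abs_sub_comm]
    have htri : |f a - f b| ≤ |f a| + |f b| := abs_sub _ _
    rw [hd]
    rcases le_total 1 γ with h1 | h1
    · rw [min_eq_right h1, Real.rpow_one]
      suffices |f a - f b| ≤ N * (b - a) by nlinarith [mul_nonneg hN hd0.le]
      by_cases hm : t₀ ∈ Set.Ioo a b
      · have lin : ∀ t : ℝ, |f t| ≤ N * |t - t₀| := by
          intro t
          by_cases ht : |t - t₀| ≤ 1
          · refine (hf0' t).trans (mul_le_mul_of_nonneg_left ?_ hN)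
            exact Real.rpow_le_self_of_le_one (abs_nonneg _) ht h1
          · rw [hsupp t, abs_zero]
            · positivity
            · intro hh
              exact ht (abs_le.2 ⟨by linarith [hh.1], by linarith [hh.2]⟩)
        have ha := lin a
        have hb := lin b
        rw [abs_of_neg (a := a - t₀) (by linarith [hm.1])] at ha
        rw [abs_of_pos (a := b - t₀) (by linarith [hm.2])] at hb
        linarith
      · obtain ⟨c, hc, hne, e⟩ := mvt hm
        rw [e]
        refine mul_le_mul_of_nonneg_right ?_ hd0.le
        by_cases hcs : c ∈ Set.Icc (t₀ - R) (t₀ + R)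
        · refine (hf1 c hne).trans ?_
          have : |c - t₀| ^ (γ - 1) ≤ 1 := Real.rpow_le_one (abs_nonneg _)
            (abs_le.2 ⟨by linarith [hcs.1], by linarith [hcs.2]⟩) (by linarith)
          nlinarith
        · have : f =ᶠ[nhds c] fun _ => (0 : ℝ) := by
            filter_upwards [isClosed_Icc.isOpen_compl.mem_nhds hcs] with x hx using hsupp x hx
          rw [this.deriv_eq]
          simpa using hN
    · rw [min_eq_left h1]
      by_cases hc : (|a - t₀| + |b - t₀|) / 2 ≤ b - a
      · have hconc := (Real.concaveOn_rpow hγ.le h1).2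
          (Set.mem_Ici.2 (abs_nonneg (a - t₀))) (Set.mem_Ici.2 (abs_nonneg (b - t₀)))
          (show (0 : ℝ) ≤ 1/2 by norm_num) (show (0 : ℝ) ≤ 1/2 by norm_num) (by norm_num)
        simp only [smul_eq_mul] at hconc
        have hmono : (1/2 * |a - t₀| + 1/2 * |b - t₀|) ^ γ ≤ (b - a) ^ γ :=
          Real.rpow_le_rpow (by positivity) (by linarith) hγ.le
        have := mul_le_mul_of_nonneg_left (hconc.trans hmono) hN
        linarith [hf0' a, hf0' b]
      · push Not at hc
        have hm : t₀ ∉ Set.Ioo a b := by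
          intro hm
          rw [abs_of_neg (by linarith [hm.1]), abs_of_pos (by linarith [hm.2])] at hc
          linarith
        obtain ⟨c, hcm, hne, e⟩ := mvt hm
        have hlow : (b - a) / 2 ≤ |c - t₀| := by
          obtain ⟨c1, c2⟩ := hcm
          by_cases h : t₀ ≤ a
          · rw [abs_of_nonneg (by linarith), abs_of_nonneg (by linarith)] at hc
            rw [abs_of_nonneg (by linarith)]
            linarith
          · have h' : b ≤ t₀ := by
              by_contra h'
              exact hm ⟨by linarith, by linarith⟩
            rw [abs_of_nonpos (by linarith), abs_of_nonpos (by linarith)] at hc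
            rw [abs_of_nonpos (by linarith)]
            linarith
        have hp : |c - t₀| ^ (γ - 1) ≤ ((b - a) / 2) ^ (γ - 1) :=
          Real.rpow_le_rpow_of_nonpos (by linarith) hlow (by linarith)
        have hq : ((b - a) / 2) ^ (γ - 1) * (b - a) ≤ 2 * (b - a) ^ γ := by
          have e1 : ((b - a) / 2) ^ (γ - 1) = ((b - a) / 2) ^ γ / ((b - a) / 2) :=
            Real.rpow_sub_one (by linarith) γ
          have e2 : ((b - a) / 2) ^ γ ≤ (b - a) ^ γ :=
            Real.rpow_le_rpow (by linarith) (by linarith) hγ.le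
          have e3 : ((b - a) / 2) ^ γ / ((b - a) / 2) * (b - a) = 2 * ((b - a) / 2) ^ γ := by
            field_simp
          rw [e1, e3]
          linarith
        rw [e]
        calc |deriv f c| * (b - a) ≤ (N * ((b - a) / 2) ^ (γ - 1)) * (b - a) :=
              mul_le_mul_of_nonneg_right
                ((hf1 c hne).trans (mul_le_mul_of_nonneg_left hp hN)) hd0.le
          _ = N * (((b - a) / 2) ^ (γ - 1) * (b - a)) := by ring
          _ ≤ N * (2 * (b - a) ^ γ) := mul_le_mul_of_nonneg_left hq hN
          _ = 2 * N * (b - a) ^ γ := by ring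
  intro t₁ t₂
  rcases lt_trichotomy t₁ t₂ with h | h | h
  · exact key _ _ h
  · subst h
    rw [sub_self, abs_zero]
    positivity
  · rw [abs_sub_comm, abs_sub_comm t₁]
    exact key _ _ h
end

section
/- Let κ ∈ (0,1] and let f : ℂ → ℂ satisfy Lip_κ(f) < ∞. Then for all s₁, s₂ in ℂ the integral defining U(s₁,s₂;f) converges absolutely, U(s₁,s₁;f) = 0, U(s₁,s₂;f) = U(s₂,s₁;f), and for every δ ∈ (0,κ) there is a constant C depending only on κ and δ such that for all s₁, s₂, r₁, r₂ in the closed unit disc of ℂ one has |U(s₁,s₂;f) − U(r₁,r₂;f)| ≤ C·Lip_κ(f)·(|s₁−r₁|^δ + |s₂−r₂|^δ). -/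
open MeasureTheory

/-- `U(s₁, s₂; f) = ∫₀¹ [f((1−t)s₁ + t s₂) − (1−t)f(s₁) − t f(s₂)]/(t(1−t)) dt`. -/
noncomputable def Ucoef (f : ℂ → ℂ) (s₁ s₂ : ℂ) : ℂ :=
  ∫ t in Set.Ioo (0:ℝ) 1,
    (f ((1 - t) • s₁ + t • s₂) - (1 - t) • f s₁ - t • f s₂) / ((t * (1 - t) : ℝ) : ℂ)

lemma hold_cont {κ M : ℝ} (hκ0 : 0 < κ) {f : ℂ → ℂ}
    (hf : ∀ z w : ℂ, ‖f z - f w‖ ≤ M * ‖z - w‖ ^ κ) : Continuous f := by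
  rw [continuous_iff_continuousAt]
  intro w
  rw [ContinuousAt, tendsto_iff_norm_sub_tendsto_zero]
  refine squeeze_zero (fun _ => norm_nonneg _) (fun z => hf z w) ?_
  have h : Continuous (fun z : ℂ => M * ‖z - w‖ ^ κ) :=
    continuous_const.mul ((by fun_prop : Continuous fun z : ℂ => ‖z - w‖).rpow_const
      (fun _ => Or.inr hκ0.le))
  have := h.tendsto w
  simpa [Real.zero_rpow hκ0.ne'] using this

lemma hold_nonneg {κ M : ℝ} {f : ℂ → ℂ}
    (hf : ∀ z w : ℂ, ‖f z - f w‖ ≤ M * ‖z - w‖ ^ κ) : 0 ≤ M := by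
  have := hf 1 0
  simp at this
  exact (norm_nonneg _).trans this

lemma wt_int {a : ℝ} (ha : 0 < a) :
    IntegrableOn (fun t : ℝ => t ^ (a - 1) + (1 - t) ^ (a - 1)) (Set.Ioo 0 1) := by
  have h1 : IntervalIntegrable (fun t : ℝ => t ^ (a - 1)) volume 0 1 :=
    intervalIntegral.intervalIntegrable_rpow' (by linarith)
  have h2 : IntervalIntegrable (fun t : ℝ => (1 - t) ^ (a - 1)) volume 0 1 := by
    have := (h1.comp_sub_left 1).symm
    simpa using this
  have := h1.add h2
  rw [intervalIntegrable_iff_integrableOn_Ioo_of_le zero_le_one] at this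
  exact this

lemma key {κ δ M : ℝ} (hκ0 : 0 < κ) (hκ1 : κ ≤ 1) (hδ0 : 0 < δ) (hδκ : δ < κ) {f : ℂ → ℂ}
    (hf : ∀ z w : ℂ, ‖f z - f w‖ ≤ M * ‖z - w‖ ^ κ) {x s y r : ℂ} {t E : ℝ} (ht : 0 < t)
    (hE : 0 ≤ E) (h1 : ‖x - s‖ ≤ 2 * t) (h2 : ‖y - r‖ ≤ 2 * t) (h3 : ‖x - y‖ ≤ E)
    (h4 : ‖s - r‖ ≤ E) :
    ‖(f x - f s) - (f y - f r)‖ ≤ 4 * M * (t ^ (κ - δ) * E ^ δ) := by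
  have hM := hold_nonneg hf
  have hb : ∀ z w : ℂ, ∀ b : ℝ, ‖z - w‖ ≤ b → ‖f z - f w‖ ≤ M * b ^ κ := fun z w b h =>
    (hf z w).trans (by gcongr)
  rcases le_total t E with h | h
  · have e : t ^ κ ≤ t ^ (κ - δ) * E ^ δ := by
      calc t ^ κ = t ^ (κ - δ) * t ^ δ := by rw [← Real.rpow_add ht]; congr 1; ring
        _ ≤ _ := by gcongr
    have e2 : (2 * t) ^ κ ≤ 2 * t ^ κ := by
      rw [Real.mul_rpow (by norm_num) ht.le]
      gcongr
      calc (2:ℝ) ^ κ ≤ 2 ^ (1:ℝ) := Real.rpow_le_rpow_of_exponent_le (by norm_num) hκ1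
        _ = 2 := by simp
    have e3 : M * (2 * t) ^ κ ≤ M * (2 * (t ^ (κ - δ) * E ^ δ)) := by
      gcongr; linarith
    have := norm_sub_le (f x - f s) (f y - f r)
    linarith [hb _ _ _ h1, hb _ _ _ h2]
  · have e : E ^ κ ≤ t ^ (κ - δ) * E ^ δ := by
      calc E ^ κ = E ^ (κ - δ) * E ^ δ := by
            rw [← Real.rpow_add_of_nonneg hE (by linarith) hδ0.le]; congr 1; ring
        _ ≤ _ := by gcongr
    have e3 : M * E ^ κ ≤ M * (t ^ (κ - δ) * E ^ δ) := by gcongr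
    have e4 : 0 ≤ M * (t ^ (κ - δ) * E ^ δ) := by positivity
    have := norm_sub_le (f x - f y) (f s - f r)
    rw [show (f x - f s) - (f y - f r) = (f x - f y) - (f s - f r) by ring]
    linarith [hb _ _ _ h3, hb _ _ _ h4]

/-- Splitting of the integrand. -/
lemma split_eq (a b c : ℂ) {t : ℝ} (h0 : 0 < t) (h1 : t < 1) :
    (a - (1 - t) • b - t • c) / ((t * (1 - t) : ℝ) : ℂ)
      = ((t⁻¹ : ℝ) : ℂ) * (a - b) + (((1 - t)⁻¹ : ℝ) : ℂ) * (a - c) := by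
  have e0 : (t : ℂ) ≠ 0 := by exact_mod_cast h0.ne'
  have e1 : (1 - t : ℂ) ≠ 0 := by
    have : (1 - t : ℝ) ≠ 0 := by linarith
    exact_mod_cast this
  simp only [Complex.real_smul]
  push_cast
  field_simp
  ring

lemma comb_bound (p q : ℂ) {t a K : ℝ} (h0 : 0 < t) (h1 : t < 1)
    (hp : ‖p‖ ≤ K * t ^ a) (hq : ‖q‖ ≤ K * (1 - t) ^ a) :
    ‖((t⁻¹ : ℝ) : ℂ) * p + (((1 - t)⁻¹ : ℝ) : ℂ) * q‖
      ≤ K * (t ^ (a - 1) + (1 - t) ^ (a - 1)) := by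
  have h1' : 0 < 1 - t := by linarith
  rw [Real.rpow_sub_one h0.ne', Real.rpow_sub_one h1'.ne']
  refine (norm_add_le _ _).trans ?_
  rw [norm_mul, norm_mul, Complex.norm_real, Complex.norm_real,
    Real.norm_of_nonneg (by positivity), Real.norm_of_nonneg (by positivity)]
  calc _ ≤ t⁻¹ * (K * t ^ a) + (1 - t)⁻¹ * (K * (1 - t) ^ a) := by gcongr
    _ = _ := by ring

lemma U_int {κ M : ℝ} (hκ0 : 0 < κ) {f : ℂ → ℂ}
    (hf : ∀ z w : ℂ, ‖f z - f w‖ ≤ M * ‖z - w‖ ^ κ) (s₁ s₂ : ℂ) :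
    IntegrableOn
          (fun t : ℝ =>
            (f ((1 - t) • s₁ + t • s₂) - (1 - t) • f s₁ - t • f s₂) / ((t * (1 - t) : ℝ) : ℂ))
          (Set.Ioo 0 1) := by
  have hc := hold_cont hκ0 hf
  refine Integrable.mono' ((wt_int hκ0).const_mul (M * ‖s₁ - s₂‖ ^ κ)) ?_ ?_
  · refine Measurable.aestronglyMeasurable ?_
    refine Measurable.div (Continuous.measurable (by fun_prop)) (Continuous.measurable (by fun_prop))
  · filter_upwards [ae_restrict_mem measurableSet_Ioo] with t ht
    have h1' : 0 ≤ 1 - t := by linarith [ht.2]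
    rw [split_eq _ _ _ ht.1 ht.2]
    refine comb_bound _ _ ht.1 ht.2 ?_ ?_
    · refine (hf _ _).trans (le_of_eq ?_)
      rw [show (1 - t) • s₁ + t • s₂ - s₁ = -(t • (s₁ - s₂)) by
        simp only [Complex.real_smul]; push_cast; ring, norm_neg, norm_smul,
        Real.norm_of_nonneg ht.1.le, Real.mul_rpow ht.1.le (norm_nonneg _)]
      ring
    · refine (hf _ _).trans (le_of_eq ?_)
      rw [show (1 - t) • s₁ + t • s₂ - s₂ = (1 - t) • (s₁ - s₂) by
        simp only [Complex.real_smul]; push_cast; ring, norm_smul,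
        Real.norm_of_nonneg h1', Real.mul_rpow h1' (norm_nonneg _)]
      ring

lemma U_self (f : ℂ → ℂ) (s : ℂ) : Ucoef f s s = 0 := by
  unfold Ucoef
  have : ∀ t : ℝ, (f ((1 - t) • s + t • s) - (1 - t) • f s - t • f s)
      / ((t * (1 - t) : ℝ) : ℂ) = 0 := by
    intro t
    rw [← add_smul, sub_sub, ← add_smul]
    simp
  simp only [this, integral_zero]

lemma U_symm (f : ℂ → ℂ) (s₁ s₂ : ℂ) : Ucoef f s₁ s₂ = Ucoef f s₂ s₁ := by
  unfold Ucoef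
  rw [← integral_Ioc_eq_integral_Ioo, ← integral_Ioc_eq_integral_Ioo,
    ← intervalIntegral.integral_of_le zero_le_one, ← intervalIntegral.integral_of_le zero_le_one]
  have := intervalIntegral.integral_comp_sub_left (a := 0) (b := 1) (fun t : ℝ =>
    (f ((1 - t) • s₂ + t • s₁) - (1 - t) • f s₂ - t • f s₁) / ((t * (1 - t) : ℝ) : ℂ)) 1
  rw [sub_self, sub_zero] at this
  rw [← this]
  congr 1
  ext t
  rw [sub_sub_cancel, add_comm (t • s₂), sub_right_comm, mul_comm t]

lemma U_diff {κ δ M : ℝ} (hκ0 : 0 < κ) (hκ1 : κ ≤ 1) (hδ0 : 0 < δ) (hδκ : δ < κ) {f : ℂ → ℂ}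
    (hf : ∀ z w : ℂ, ‖f z - f w‖ ≤ M * ‖z - w‖ ^ κ) (s₁ s₂ r₁ r₂ : ℂ)
    (hs₁ : ‖s₁‖ ≤ 1) (hs₂ : ‖s₂‖ ≤ 1) (hr₁ : ‖r₁‖ ≤ 1) (hr₂ : ‖r₂‖ ≤ 1) {E : ℝ}
    (hE1 : ‖s₁ - r₁‖ ≤ E) (hE2 : ‖s₂ - r₂‖ ≤ E) :
    ‖Ucoef f s₁ s₂ - Ucoef f r₁ r₂‖ ≤
      4 * M * E ^ δ * ∫ t in Set.Ioo (0:ℝ) 1, (t ^ (κ - δ - 1) + (1 - t) ^ (κ - δ - 1)) := by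
  unfold Ucoef
  have hE : 0 ≤ E := (norm_nonneg _).trans hE1
  rw [← integral_sub (U_int hκ0 hf s₁ s₂) (U_int hκ0 hf r₁ r₂), ← integral_const_mul]
  refine norm_integral_le_of_norm_le ((wt_int (sub_pos.2 hδκ)).const_mul _) ?_
  filter_upwards [ae_restrict_mem measurableSet_Ioo] with t ht
  have h1' : 0 < 1 - t := by linarith [ht.2]
  rw [split_eq _ _ _ ht.1 ht.2, split_eq _ _ _ ht.1 ht.2]
  rw [add_sub_add_comm, ← mul_sub, ← mul_sub]
  have c1 : ∀ a b : ℂ, ‖a‖ ≤ 1 → ‖b‖ ≤ 1 → ‖(1 - t) • a + t • b - a‖ ≤ 2 * t := by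
    intro a b ha hb
    rw [show (1 - t) • a + t • b - a = t • (b - a) by
        simp only [Complex.real_smul]; push_cast; ring, norm_smul,
        Real.norm_of_nonneg ht.1.le, mul_comm]
    have := norm_sub_le b a
    have := ht.1
    gcongr; linarith
  have c2 : ∀ a b : ℂ, ‖a‖ ≤ 1 → ‖b‖ ≤ 1 → ‖(1 - t) • a + t • b - b‖ ≤ 2 * (1 - t) := by
    intro a b ha hb
    rw [show (1 - t) • a + t • b - b = (1 - t) • (a - b) by
        simp only [Complex.real_smul]; push_cast; ring, norm_smul,
        Real.norm_of_nonneg h1'.le, mul_comm]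
    have := norm_sub_le a b
    gcongr; linarith
  have c3 : ‖(1 - t) • s₁ + t • s₂ - ((1 - t) • r₁ + t • r₂)‖ ≤ E := by
    rw [add_sub_add_comm, ← smul_sub, ← smul_sub]
    refine (norm_add_le _ _).trans ?_
    rw [norm_smul, norm_smul, Real.norm_of_nonneg h1'.le, Real.norm_of_nonneg ht.1.le]
    nlinarith [ht.1]
  refine comb_bound _ _ ht.1 ht.2 ?_ ?_
  · refine (key hκ0 hκ1 hδ0 hδκ hf ht.1 hE (c1 _ _ hs₁ hs₂) (c1 _ _ hr₁ hr₂) c3 hE1).trans_eq ?_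
    ring
  · refine (key hκ0 hκ1 hδ0 hδκ hf h1' hE (c2 _ _ hs₁ hs₂) (c2 _ _ hr₁ hr₂) c3 hE2).trans_eq ?_
    ring

/-- For `κ ∈ (0,1]` and `f : ℂ → ℂ` with `Lip_κ(f) ≤ M`, the integral defining
`U(s₁,s₂;f)` converges absolutely, `U(s₁,s₁;f) = 0`, `U(s₁,s₂;f) = U(s₂,s₁;f)`, and for
every `δ ∈ (0,κ)` there is a constant `C = C(κ,δ)` such that for all `s₁,s₂,r₁,r₂` in the
closed unit disc, `|U(s₁,s₂;f) − U(r₁,r₂;f)| ≤ C·Lip_κ(f)·(|s₁−r₁|^δ + |s₂−r₂|^δ)`. -/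
theorem Ucoef_properties (κ : ℝ) (hκ0 : 0 < κ) (hκ1 : κ ≤ 1)
    (δ : ℝ) (hδ0 : 0 < δ) (hδκ : δ < κ) :
    ∃ C : ℝ, ∀ (f : ℂ → ℂ) (M : ℝ),
      (∀ z w : ℂ, ‖f z - f w‖ ≤ M * ‖z - w‖ ^ κ) →
      (∀ s₁ s₂ : ℂ,
        IntegrableOn
          (fun t : ℝ =>
            (f ((1 - t) • s₁ + t • s₂) - (1 - t) • f s₁ - t • f s₂) / ((t * (1 - t) : ℝ) : ℂ))
          (Set.Ioo 0 1)) ∧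
      (∀ s : ℂ, Ucoef f s s = 0) ∧
      (∀ s₁ s₂ : ℂ, Ucoef f s₁ s₂ = Ucoef f s₂ s₁) ∧
      (∀ s₁ s₂ r₁ r₂ : ℂ, ‖s₁‖ ≤ 1 → ‖s₂‖ ≤ 1 → ‖r₁‖ ≤ 1 → ‖r₂‖ ≤ 1 →
        ‖Ucoef f s₁ s₂ - Ucoef f r₁ r₂‖ ≤ C * M * (‖s₁ - r₁‖ ^ δ + ‖s₂ - r₂‖ ^ δ)) := by
  refine ⟨4 * ∫ t in Set.Ioo (0:ℝ) 1, (t ^ (κ - δ - 1) + (1 - t) ^ (κ - δ - 1)), ?_⟩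
  intro f M hf
  refine ⟨U_int hκ0 hf, U_self f, U_symm f, ?_⟩
  intro s₁ s₂ r₁ r₂ hs₁ hs₂ hr₁ hr₂
  have hM := hold_nonneg hf
  refine (U_diff hκ0 hκ1 hδ0 hδκ hf s₁ s₂ r₁ r₂ hs₁ hs₂ hr₁ hr₂
    (le_max_left _ _) (le_max_right _ _)).trans ?_
  have hI : 0 ≤ ∫ t in Set.Ioo (0:ℝ) 1, (t ^ (κ - δ - 1) + (1 - t) ^ (κ - δ - 1)) := by
    refine setIntegral_nonneg measurableSet_Ioo fun t ht => ?_
    have h0 := ht.1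
    have h1 : 0 < 1 - t := by linarith [ht.2]
    positivity
  have hm : max ‖s₁ - r₁‖ ‖s₂ - r₂‖ ^ δ ≤ ‖s₁ - r₁‖ ^ δ + ‖s₂ - r₂‖ ^ δ := by
    have p1 : 0 ≤ ‖s₁ - r₁‖ ^ δ := by positivity
    have p2 : 0 ≤ ‖s₂ - r₂‖ ^ δ := by positivity
    rcases max_choice ‖s₁ - r₁‖ ‖s₂ - r₂‖ with h | h <;> rw [h] <;> linarith
  generalize (∫ t in Set.Ioo (0:ℝ) 1, (t ^ (κ - δ - 1) + (1 - t) ^ (κ - δ - 1))) = I at *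
  calc _ = 4 * I * M * max ‖s₁ - r₁‖ ‖s₂ - r₂‖ ^ δ := by ring
    _ ≤ _ := by gcongr
end

section
/- Let n ≥ 3 be an integer. There is a constant C, depending only on n, with the following property: for every complex Hilbert space H, all bounded self-adjoint operators A, B on H, every bounded operator J on H, and every compactly supported f ∈ Cⁿ(ℝ), one has, in operator norm, ‖f(A) J − J f(B)‖ ≤ C · N_n(f) · ‖A J − J B‖. -/
open scoped BigOperators

/-- `N_n(f) = ∫ F(x) ⟨x⟩^{n−2} dx` with `F(x) = Σ_{l=0}^n |f^{(l)}(x)| ⟨x⟩^{−n+l}`,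
`⟨x⟩ = √(1+x²)`. -/
noncomputable def Nseminorm (n : ℕ) (f : ℝ → ℝ) : ℝ :=
  ∫ x : ℝ,
    (∑ l ∈ Finset.range (n + 1),
      |iteratedDeriv l f x| * Real.sqrt (1 + x ^ 2) ^ ((l : ℤ) - (n : ℤ))) *
    Real.sqrt (1 + x ^ 2) ^ ((n : ℤ) - 2)

open MeasureTheory FourierTransform

lemma qc_exp_unitary {H : Type*} [NormedAddCommGroup H] [InnerProductSpace ℂ H] [CompleteSpace H]
    (A : H →L[ℂ] H) (hA : IsSelfAdjoint A) (s : ℝ) :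
    NormedSpace.exp (s • (Complex.I • A)) ∈ unitary (H →L[ℂ] H) := by
  let +nondep : NormedAlgebra ℚ (H →L[ℂ] H) := .restrictScalars ℚ ℂ _
  apply NormedSpace.exp_mem_unitary_of_mem_skewAdjoint
  rw [skewAdjoint.mem_iff, star_smul, star_smul, hA.star_eq]
  simp

lemma qc_exp_comm {H : Type*} [NormedAddCommGroup H] [InnerProductSpace ℂ H] [CompleteSpace H]
    (A B J : H →L[ℂ] H) (hA : IsSelfAdjoint A) (hB : IsSelfAdjoint B) (t : ℝ) :
    ‖NormedSpace.exp (t • (Complex.I • A)) * J - J * NormedSpace.exp (t • (Complex.I • B))‖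
      ≤ |t| * ‖A * J - J * B‖ := by
  let +nondep : NormedAlgebra ℚ (H →L[ℂ] H) := .restrictScalars ℚ ℂ _
  set a := Complex.I • A with ha
  set b := Complex.I • B with hb
  have hinv : ∀ s : ℝ, NormedSpace.exp (s • (-b)) * NormedSpace.exp (s • b) = 1 := by
    intro s
    have : s • (-b) = - (s • b) := smul_neg _ _
    rw [this, ← NormedSpace.exp_add_of_commute]
    · simp
    · exact (Commute.refl _).neg_left
  have hbu : ∀ s : ℝ, NormedSpace.exp (s • (-b)) ∈ unitary (H →L[ℂ] H) := by
    intro s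
    have := qc_exp_unitary B hB (-s)
    rwa [neg_smul, ← smul_neg] at this
  have hd : ∀ s : ℝ, HasDerivAt (fun s : ℝ => NormedSpace.exp (s • a) * J * NormedSpace.exp (s • (-b)))
      (NormedSpace.exp (s • a) * (Complex.I • (A * J - J * B)) * NormedSpace.exp (s • (-b))) s := by
    intro s
    have h1 := ((hasDerivAt_exp_smul_const (𝕂 := ℝ) a s).mul_const J).mul
      (hasDerivAt_exp_smul_const' (𝕂 := ℝ) (-b) s)
    convert! h1 using 1
    simp only [ha, hb, smul_sub, mul_sub, sub_mul, mul_assoc, smul_mul_assoc, mul_smul_comm, neg_mul,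
      mul_neg]
    abel
  have hb' : ∀ s : ℝ, ‖NormedSpace.exp (s • a) * (Complex.I • (A * J - J * B)) * NormedSpace.exp (s • (-b))‖
      ≤ ‖A * J - J * B‖ := by
    intro s
    rw [CStarRing.norm_mul_mem_unitary _ (hbu s), CStarRing.norm_mem_unitary_mul _ (qc_exp_unitary A hA s),
      norm_smul]
    simp
  have := Convex.norm_image_sub_le_of_norm_hasDerivWithin_le (s := Set.univ) (x := (0:ℝ)) (y := t)
    (fun s _ => (hd s).hasDerivWithinAt) (fun s _ => hb' s) convex_univ (Set.mem_univ _) (Set.mem_univ _)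
  have h2 : NormedSpace.exp (t • a) * J - J * NormedSpace.exp (t • b)
      = (NormedSpace.exp (t • a) * J * NormedSpace.exp (t • (-b)) - J) * NormedSpace.exp (t • b) := by
    rw [sub_mul, mul_assoc _ _ (NormedSpace.exp (t • b)), hinv, mul_one]
  rw [h2, CStarRing.norm_mul_mem_unitary _ (qc_exp_unitary B hB t)]
  simpa [mul_comm] using this

lemma qc_cfc_exp {H : Type*} [NormedAddCommGroup H] [InnerProductSpace ℂ H] [CompleteSpace H]
    (A : H →L[ℂ] H) (hA : IsSelfAdjoint A) (t : ℝ) (c : ℂ) :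
    cfc (fun z : ℂ => Complex.exp ((t : ℂ) * Complex.I * (z.re : ℂ)) * c) A =
      c • NormedSpace.exp (t • (Complex.I • A)) := by
  have h1 : cfc (fun z : ℂ => Complex.exp ((t : ℂ) * Complex.I * (z.re : ℂ)) * c) A
      = cfc (fun z : ℂ => c • Complex.exp (((t : ℂ) * Complex.I) • z)) A := by
    apply cfc_congr
    intro z hz
    have : z = (z.re : ℂ) := hA.mem_spectrum_eq_re hz
    simp only [smul_eq_mul]
    rw [← this, mul_comm]
  have hn : IsStarNormal A := hA.isStarNormal
  have hn' : IsStarNormal (((t : ℂ) * Complex.I) • A) := inferInstance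
  rw [h1, cfc_smul c _ A (by fun_prop), cfc_comp_smul ((t : ℂ) * Complex.I) Complex.exp A (by fun_prop) hn,
    CFC.complex_exp_eq_normedSpace_exp hn']
  rw [mul_smul, Complex.coe_smul]

lemma qc_cfc_fourier {H : Type*} [NormedAddCommGroup H] [InnerProductSpace ℂ H] [CompleteSpace H]
    (A : H →L[ℂ] H) (hA : IsSelfAdjoint A) (f : ℝ → ℝ) (F : ℝ → ℂ) (hFc : Continuous F)
    (hF : Integrable F)
    (hf : ∀ x, (f x : ℂ) = ∫ t : ℝ, Complex.exp (((2 * Real.pi * t : ℝ) : ℂ) * Complex.I * (x : ℂ)) * F t) :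
    cfc f A = ∫ t : ℝ, F t • NormedSpace.exp ((2 * Real.pi * t) • (Complex.I • A)) := by
  have hn : IsStarNormal A := hA.isStarNormal
  rw [cfc_real_eq_complex f hA]
  simp_rw [hf]
  rw [cfc_integral (fun (t : ℝ) (z : ℂ) =>
    Complex.exp (((2 * Real.pi * t : ℝ) : ℂ) * Complex.I * (z.re : ℂ)) * F t) (fun t => ‖F t‖) A ?_ ?_ ?_ hn]
  · simp_rw [qc_cfc_exp A hA]
  · apply Continuous.continuousOn
    unfold Function.uncurry
    fun_prop
  · refine .of_forall fun t z _ => ?_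
    rw [norm_mul, mul_assoc, mul_comm Complex.I, ← mul_assoc, ← Complex.ofReal_mul, Complex.norm_exp_ofReal_mul_I, one_mul]
  · exact hF.norm.2

lemma qc_fourier_bound {H : Type*} [NormedAddCommGroup H] [InnerProductSpace ℂ H] [CompleteSpace H]
    (A B J : H →L[ℂ] H) (hA : IsSelfAdjoint A) (hB : IsSelfAdjoint B) (f : ℝ → ℝ)
    (F : ℝ → ℂ) (hFc : Continuous F) (hF : Integrable F)
    (hF' : Integrable (fun t : ℝ => ‖F t‖ * |2 * Real.pi * t|))
    (hf : ∀ x, (f x : ℂ) = ∫ t : ℝ, Complex.exp (((2 * Real.pi * t : ℝ) : ℂ) * Complex.I * (x : ℂ)) * F t) :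
    ‖cfc f A * J - J * cfc f B‖ ≤ (∫ t : ℝ, ‖F t‖ * |2 * Real.pi * t|) * ‖A * J - J * B‖ := by
  let +nondep : NormedAlgebra ℚ (H →L[ℂ] H) := .restrictScalars ℚ ℂ _
  have hint : ∀ X : H →L[ℂ] H, IsSelfAdjoint X →
      Integrable (fun t : ℝ => F t • NormedSpace.exp ((2 * Real.pi * t) • (Complex.I • X))) := by
    intro X hX
    have hc : Continuous (fun t : ℝ => NormedSpace.exp ((2 * Real.pi * t) • (Complex.I • X))) :=
      NormedSpace.exp_continuous.comp (by fun_prop)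
    refine Integrable.mono' hF.norm (hFc.smul hc).aestronglyMeasurable (.of_forall fun t => ?_)
    rw [norm_smul, ← mul_one (NormedSpace.exp _), CStarRing.norm_mem_unitary_mul _ (qc_exp_unitary X hX _)]
    exact mul_le_of_le_one_right (norm_nonneg _) (ContinuousLinearMap.norm_id_le)
  rw [qc_cfc_fourier A hA f F hFc hF hf, qc_cfc_fourier B hB f F hFc hF hf]
  rw [← integral_mul_const_of_integrable (hint A hA), ← integral_const_mul_of_integrable (hint B hB),
    ← integral_sub ((hint A hA).mul_const J) ((hint B hB).const_mul J), ← integral_mul_const]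
  refine norm_integral_le_of_norm_le (hF'.mul_const _) (.of_forall fun t => ?_)
  rw [smul_mul_assoc, mul_smul_comm, ← smul_sub, norm_smul, mul_assoc ‖F t‖]
  exact mul_le_mul_of_nonneg_left (qc_exp_comm A B J hA hB _) (norm_nonneg _)

lemma qc_hcs (f : ℝ → ℝ) (hs : HasCompactSupport f) (k : ℕ) :
    HasCompactSupport (iteratedDeriv k f) := by
  have := hs.iteratedFDeriv (𝕜 := ℝ) k
  rw [iteratedDeriv_eq_equiv_comp]
  exact this.comp_left (map_zero _)

lemma qc_hcsC (f : ℝ → ℂ) (hs : HasCompactSupport f) (k : ℕ) :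
    HasCompactSupport (iteratedDeriv k f) := by
  have := hs.iteratedFDeriv (𝕜 := ℝ) k
  rw [iteratedDeriv_eq_equiv_comp]
  exact this.comp_left (map_zero _)

lemma qc_base {H : Type*} [NormedAddCommGroup H] [InnerProductSpace ℂ H] [CompleteSpace H]
    (A B J : H →L[ℂ] H) (hA : IsSelfAdjoint A) (hB : IsSelfAdjoint B) (f : ℝ → ℝ)
    (hf : ContDiff ℝ 3 f) (hs : HasCompactSupport f) (R : ℝ) (hR : 0 < R) :
    ‖cfc f A * J - J * cfc f B‖ ≤
      (R⁻¹ * (∫ x, |iteratedDeriv 1 f x|) + R * ∫ x, |iteratedDeriv 3 f x|) * ‖A * J - J * B‖ := by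
  set g : ℝ → ℂ := fun x => (f x : ℂ) with hg
  have hgc : ContDiff ℝ 3 g := Complex.ofRealCLM.contDiff.comp hf
  have hgs : HasCompactSupport g := hs.comp_left (g := fun x : ℝ => (x : ℂ)) (by simp)
  have hn : ∀ k : ℕ, k ≤ 3 → ∀ x, ‖iteratedDeriv k g x‖ = |iteratedDeriv k f x| := by
    intro k hk x
    rw [← norm_iteratedFDeriv_eq_norm_iteratedDeriv, ← Real.norm_eq_abs,
      ← norm_iteratedFDeriv_eq_norm_iteratedDeriv]
    exact Complex.ofRealLI.norm_iteratedFDeriv_comp_left (f := f) (hf.contDiffAt) (by exact_mod_cast hk)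
  have hint : ∀ k : ℕ, k ≤ 3 → Integrable (iteratedDeriv k g) := fun k hk =>
    (hgc.continuous_iteratedDeriv k (by exact_mod_cast hk)).integrable_of_hasCompactSupport (qc_hcsC g hgs k)
  have hF : ∀ k : ℕ, k ≤ 3 → ∀ t : ℝ, |2 * Real.pi * t| ^ k * ‖𝓕 g t‖ ≤ ∫ x, |iteratedDeriv k f x| := by
    intro k hk t
    have h1 := Real.fourier_iteratedDeriv (N := 3) (n := k) (f := g) hgc
      (fun m hm => hint m (by exact_mod_cast hm)) (by exact_mod_cast hk)
    have h2 : ‖𝓕 (iteratedDeriv k g) t‖ ≤ ∫ x, ‖iteratedDeriv k g x‖ :=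
      VectorFourier.norm_fourierIntegral_le_integral_norm _ _ _ _ _
    simp_rw [hn k hk] at h2
    rw [h1] at h2
    convert! h2 using 1
    simp [abs_mul]
  have hFc : Continuous (𝓕 g) :=
    VectorFourier.fourierIntegral_continuous Real.continuous_fourierChar
      (by exact continuous_inner) (by simpa using hint 0 (by norm_num))
  set I0 := ∫ x, |iteratedDeriv 0 f x|
  set I1 := ∫ x, |iteratedDeriv 1 f x|
  set I2 := ∫ x, |iteratedDeriv 2 f x|
  set I3 := ∫ x, |iteratedDeriv 3 f x|
  have hc : 2 * Real.pi * R ≠ 0 := by positivity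
  have hb : ∀ t : ℝ, ‖𝓕 g t‖ * |2 * Real.pi * t| ≤ (I1 + R ^ 2 * I3) * (1 + (2 * Real.pi * R * t) ^ 2)⁻¹ := by
    intro t
    rw [← div_eq_mul_inv, le_div_iff₀ (by positivity)]
    have h1 := hF 1 (by norm_num) t
    have h3 := mul_le_mul_of_nonneg_left (hF 3 (by norm_num) t) (sq_nonneg R)
    have : (2 * Real.pi * R * t) ^ 2 = R ^ 2 * |2 * Real.pi * t| ^ 2 := by rw [sq_abs]; ring
    rw [this]
    calc _ = |2 * Real.pi * t| ^ 1 * ‖𝓕 g t‖ + R ^ 2 * (|2 * Real.pi * t| ^ 3 * ‖𝓕 g t‖) := by ring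
      _ ≤ _ := add_le_add h1 h3
  have hI1 : Integrable (fun t : ℝ => (1 + (2 * Real.pi * R * t) ^ 2)⁻¹) :=
    (integrable_inv_one_add_sq).comp_mul_left' hc
  have hb0 : ∀ t : ℝ, ‖𝓕 g t‖ ≤ (I0 + I2) * (1 + t ^ 2)⁻¹ := by
    intro t
    rw [← div_eq_mul_inv, le_div_iff₀ (by positivity)]
    have h1 := hF 0 (by norm_num) t
    have h3 := hF 2 (by norm_num) t
    have : t ^ 2 ≤ |2 * Real.pi * t| ^ 2 := by
      rw [sq_abs, mul_pow]
      have : 1 ≤ (2 * Real.pi) ^ 2 := by nlinarith [Real.pi_gt_three]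
      nlinarith [sq_nonneg t]
    nlinarith [norm_nonneg (𝓕 g t)]
  have hFi : Integrable (𝓕 g) := (integrable_inv_one_add_sq.const_mul _).mono' hFc.aestronglyMeasurable
    (.of_forall hb0)
  have hFi' : Integrable (fun t : ℝ => ‖𝓕 g t‖ * |2 * Real.pi * t|) := by
    refine (hI1.const_mul (I1 + R ^ 2 * I3)).mono' (by fun_prop) (.of_forall fun t => ?_)
    · rw [Real.norm_of_nonneg (by positivity)]; exact hb t
  have hinv : ∀ x, (f x : ℂ) = ∫ t : ℝ, Complex.exp (((2 * Real.pi * t : ℝ) : ℂ) * Complex.I * (x : ℂ)) * 𝓕 g t := by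
    intro x
    have h := congrFun (hgc.continuous.fourierInv_fourier_eq (by simpa using hint 0 (by norm_num)) hFi) x
    rw [Real.fourierInv_eq'] at h
    change _ = g x at h
    change g x = _
    rw [← h]
    congr 1
    ext t
    simp only [smul_eq_mul]
    congr 2
    simp
    ring
  refine (qc_fourier_bound A B J hA hB f (𝓕 g) hFc hFi hFi' hinv).trans ?_
  refine mul_le_mul_of_nonneg_right ?_ (norm_nonneg _)
  have h13 : 0 ≤ I1 + R ^ 2 * I3 := add_nonneg (integral_nonneg fun _ => abs_nonneg _)
    (mul_nonneg (sq_nonneg _) (integral_nonneg fun _ => abs_nonneg _))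
  calc _ ≤ ∫ t : ℝ, (I1 + R ^ 2 * I3) * (1 + (2 * Real.pi * R * t) ^ 2)⁻¹ :=
        integral_mono hFi' (hI1.const_mul _) hb
    _ = (I1 + R ^ 2 * I3) * ((2 * Real.pi * R)⁻¹ * Real.pi) := by
        rw [integral_const_mul, Measure.integral_comp_mul_left (fun t : ℝ => (1 + t ^ 2)⁻¹),
          integral_univ_inv_one_add_sq, abs_of_pos (by positivity), smul_eq_mul]
    _ = (R⁻¹ * I1 + R * I3) / 2 := by field_simp
    _ ≤ _ := by
        have : 0 ≤ R⁻¹ * I1 + R * I3 := by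
          have : R⁻¹ * I1 + R * I3 = R⁻¹ * (I1 + R ^ 2 * I3) := by field_simp
          rw [this]; positivity
        linarith

lemma qc_bdd (ψ : ℝ → ℝ) (hψ : ContDiff ℝ 3 ψ) (hs : HasCompactSupport ψ) :
    ∃ K : ℝ, 0 ≤ K ∧ ∀ k : ℕ, k ≤ 3 → ∀ x, |iteratedDeriv k ψ x| ≤ K := by
  have : ∀ k : ℕ, ∃ K : ℝ, k ≤ 3 → ∀ x, |iteratedDeriv k ψ x| ≤ K := by
    intro k
    by_cases hk : k ≤ 3
    · obtain ⟨K, hK⟩ := (qc_hcs ψ hs k).exists_bound_of_continuous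
        (hψ.continuous_iteratedDeriv k (by exact_mod_cast hk))
      exact ⟨K, fun _ x => hK x⟩
    · exact ⟨0, fun h => absurd h hk⟩
  choose K hK using this
  refine ⟨∑ k ∈ Finset.range 4, |K k|, Finset.sum_nonneg fun _ _ => abs_nonneg _, fun k hk x => ?_⟩
  exact ((hK k hk x).trans (le_abs_self _)).trans
    (Finset.single_le_sum (f := fun k => |K k|) (fun _ _ => abs_nonneg _) (Finset.mem_range.2 (by omega)))

lemma qc_zero (g : ℝ → ℝ) (S : Set ℝ) (hS : IsClosed S) (h : ∀ y, y ∉ S → g y = 0) (k : ℕ)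
    (x : ℝ) (hx : x ∉ S) : iteratedDeriv k g x = 0 := by
  have h1 : tsupport g ⊆ S := closure_minimal (fun y hy => by
    by_contra hc
    exact hy (h y hc)) hS
  have h2 : iteratedFDeriv ℝ k g x = 0 := by
    by_contra hc
    exact hx (h1 (support_iteratedFDeriv_subset (𝕜 := ℝ) k hc))
  rw [← norm_eq_zero, ← norm_iteratedFDeriv_eq_norm_iteratedDeriv, h2, norm_zero]

lemma qc_leib (f ψ : ℝ → ℝ) (hf : ContDiff ℝ 3 f) (hψ : ContDiff ℝ 3 ψ) (K : ℝ) (hK0 : 0 ≤ K)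
    (hK : ∀ k : ℕ, k ≤ 3 → ∀ x, |iteratedDeriv k ψ x| ≤ K) (R : ℝ) (hR : 0 < R) (k : ℕ) (hk : k ≤ 3)
    (x : ℝ) :
    R ^ ((k : ℤ) - 2) * |iteratedDeriv k (fun y => f y * ψ (R⁻¹ * y)) x| ≤
      8 * K * ∑ l ∈ Finset.range 4, |iteratedDeriv l f x| * R ^ ((l : ℤ) - 2) := by
  have hle : ∀ m : ℕ, m ≤ 3 → (m : WithTop ℕ∞) ≤ 3 := fun m hm => by exact_mod_cast hm
  have hψ' : ContDiff ℝ 3 (fun y => ψ (R⁻¹ * y)) := hψ.comp (by fun_prop)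
  rw [iteratedDeriv_fun_mul ((hf.of_le (hle k hk)).contDiffAt) ((hψ'.of_le (hle k hk)).contDiffAt)]
  calc _ ≤ R ^ ((k : ℤ) - 2) * ∑ i ∈ Finset.range (k + 1), |(k.choose i : ℝ) * iteratedDeriv i f x *
          iteratedDeriv (k - i) (fun y => ψ (R⁻¹ * y)) x| := by
        gcongr
        exact Finset.abs_sum_le_sum_abs _ _
    _ ≤ ∑ i ∈ Finset.range (k + 1), 8 * K * (|iteratedDeriv i f x| * R ^ ((i : ℤ) - 2)) := by
        rw [Finset.mul_sum]
        refine Finset.sum_le_sum fun i hi => ?_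
        have hik : i ≤ k := by simpa [Nat.lt_succ_iff] using hi
        rw [iteratedDeriv_comp_const_mul (hψ.of_le (hle (k - i) (by omega)))]
        rw [abs_mul, abs_mul, abs_mul, abs_of_pos (show 0 < R⁻¹ ^ (k - i) by positivity), Nat.abs_cast]
        have h1 : (k.choose i : ℝ) ≤ 8 := by
          have : k.choose i ≤ 2 ^ k := Nat.choose_le_two_pow _ _
          have h2 : 2 ^ k ≤ 2 ^ 3 := Nat.pow_le_pow_right (by norm_num) hk
          exact_mod_cast this.trans h2
        have h2 := hK (k - i) (by omega) (R⁻¹ * x)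
        have h3 : R ^ ((k : ℤ) - 2) * R⁻¹ ^ (k - i) = R ^ ((i : ℤ) - 2) := by
          rw [inv_pow, ← zpow_natCast, ← zpow_neg, ← zpow_add₀ hR.ne']
          congr 1
          push_cast [hik]
          ring
        calc _ = (k.choose i : ℝ) * |iteratedDeriv (k - i) ψ (R⁻¹ * x)| *
              (|iteratedDeriv i f x| * (R ^ ((k : ℤ) - 2) * R⁻¹ ^ (k - i))) := by ring
          _ ≤ _ := by
              rw [h3]
              gcongr
    _ ≤ _ := by
        rw [← Finset.mul_sum]
        gcongr
        omega

lemma qc_wt (R w : ℝ) (hR : 0 < R) (hw : 0 < w) (h1 : R ≤ 2 * w) (h2 : w ≤ 4 * R) (l : ℕ) (hl : l < 4) :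
    R ^ ((l : ℤ) - 2) ≤ 16 * w ^ ((l : ℤ) - 2) := by
  interval_cases l
  · have e : ((0 : ℕ) : ℤ) - 2 = - ((2 : ℕ) : ℤ) := by norm_num
    rw [e, zpow_neg, zpow_neg, zpow_natCast, zpow_natCast, ← div_eq_mul_inv, inv_le_comm₀ (by positivity) (by positivity),
      inv_div, div_le_iff₀ (by norm_num)]
    nlinarith
  · have e : ((1 : ℕ) : ℤ) - 2 = - 1 := by norm_num
    rw [e, zpow_neg_one, zpow_neg_one, ← div_eq_mul_inv, inv_le_comm₀ (by positivity) (by positivity),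
      inv_div, div_le_iff₀ (by norm_num)]
    nlinarith
  · norm_num
  · norm_num
    linarith

lemma qc_piece (f ψ : ℝ → ℝ) (hf : ContDiff ℝ 3 f) (hψ : ContDiff ℝ 3 ψ) (K : ℝ) (hK0 : 0 ≤ K)
    (hK : ∀ k : ℕ, k ≤ 3 → ∀ x, |iteratedDeriv k ψ x| ≤ K) (R : ℝ) (hR : 0 < R)
    (hz : ∀ y, ¬ (R ≤ 2 * √(1 + y ^ 2) ∧ √(1 + y ^ 2) ≤ 4 * R) → ψ (R⁻¹ * y) = 0) (x : ℝ) :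
    R⁻¹ * |iteratedDeriv 1 (fun y => f y * ψ (R⁻¹ * y)) x| +
      R * |iteratedDeriv 3 (fun y => f y * ψ (R⁻¹ * y)) x| ≤
      if R ≤ 2 * √(1 + x ^ 2) ∧ √(1 + x ^ 2) ≤ 4 * R then
      256 * K * ∑ l ∈ Finset.range 4, |iteratedDeriv l f x| * √(1 + x ^ 2) ^ ((l : ℤ) - 2) else 0 := by
  split_ifs with h
  · have a1 := qc_leib f ψ hf hψ K hK0 hK R hR 1 (by norm_num) x
    have a3 := qc_leib f ψ hf hψ K hK0 hK R hR 3 (by norm_num) x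
    have e1 : R ^ (((1 : ℕ) : ℤ) - 2) = R⁻¹ := by norm_num
    have e3 : R ^ (((3 : ℕ) : ℤ) - 2) = R := by norm_num
    rw [e1] at a1
    rw [e3] at a3
    have : ∑ l ∈ Finset.range 4, |iteratedDeriv l f x| * R ^ ((l : ℤ) - 2) ≤
        16 * ∑ l ∈ Finset.range 4, |iteratedDeriv l f x| * √(1 + x ^ 2) ^ ((l : ℤ) - 2) := by
      rw [Finset.mul_sum]
      refine Finset.sum_le_sum fun l hl => ?_
      have := qc_wt R (√(1 + x ^ 2)) hR (by positivity) h.1 h.2 l (Finset.mem_range.1 hl)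
      calc _ ≤ |iteratedDeriv l f x| * (16 * √(1 + x ^ 2) ^ ((l : ℤ) - 2)) := by gcongr
        _ = _ := by ring
    have := mul_le_mul_of_nonneg_left this hK0
    linarith
  · have hS : IsClosed {y : ℝ | R ≤ 2 * √(1 + y ^ 2) ∧ √(1 + y ^ 2) ≤ 4 * R} :=
      IsClosed.inter (isClosed_le (f := fun _ : ℝ => R) (g := fun y : ℝ => 2 * √(1 + y ^ 2)) (by fun_prop) (by fun_prop))
        (isClosed_le (f := fun y : ℝ => √(1 + y ^ 2)) (g := fun _ : ℝ => 4 * R) (by fun_prop) (by fun_prop))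
    have hz' : ∀ y, y ∉ {y : ℝ | R ≤ 2 * √(1 + y ^ 2) ∧ √(1 + y ^ 2) ≤ 4 * R} →
        (fun y => f y * ψ (R⁻¹ * y)) y = 0 := fun y hy => by simp [hz y hy]
    rw [qc_zero _ _ hS hz' 1 x h, qc_zero _ _ hS hz' 3 x h]
    simp

lemma qc_count (w G : ℝ) (hG : 0 ≤ G) (M : ℕ) :
    ∑ j ∈ Finset.range M, (if (2 : ℝ) ^ j ≤ 2 * w ∧ w ≤ 4 * 2 ^ j then G else 0) ≤ 4 * G := by
  rw [← Finset.sum_filter, Finset.sum_const, nsmul_eq_mul]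
  refine mul_le_mul_of_nonneg_right ?_ hG
  set s := (Finset.range M).filter fun j => (2 : ℝ) ^ j ≤ 2 * w ∧ w ≤ 4 * 2 ^ j with hs
  suffices s.card ≤ 4 by exact_mod_cast this
  rcases s.eq_empty_or_nonempty with h | h
  · simp [h]
  · have hm := s.min'_mem h
    set m := s.min' h
    have : s ⊆ Finset.Icc m (m + 3) := by
      intro j hj
      refine Finset.mem_Icc.2 ⟨s.min'_le j hj, ?_⟩
      have h1 := (Finset.mem_filter.1 hj).2.1
      have h2 := (Finset.mem_filter.1 hm).2.2
      have : (2 : ℝ) ^ j ≤ 2 ^ (m + 3) := by rw [pow_add]; linarith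
      exact (pow_le_pow_iff_right₀ (by norm_num)).1 this
    refine (Finset.card_le_card this).trans ?_
    simp only [Nat.card_Icc]
    omega

lemma qc_bump : ∃ χ : ℝ → ℝ, ContDiff ℝ 3 χ ∧ HasCompactSupport χ ∧ (∀ x, |x| ≤ 1 → χ x = 1) ∧
    (∀ x, 2 ≤ |x| → χ x = 0) := by
  let b : ContDiffBump (0 : ℝ) := ⟨1, 2, by norm_num, by norm_num⟩
  refine ⟨b, b.contDiff, b.hasCompactSupport, fun x hx => b.one_of_mem_closedBall ?_, fun x hx => b.zero_of_le_dist ?_⟩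
  · simpa [b] using hx
  · simpa [b] using hx

lemma qc_cutoffs : ∃ (ψ : ℕ → ℝ → ℝ) (K : ℝ), 0 ≤ K ∧ (∀ j, ContDiff ℝ 3 (ψ j)) ∧
    (∀ j, ∀ k : ℕ, k ≤ 3 → ∀ x, |iteratedDeriv k (ψ j) x| ≤ K) ∧
    (∀ j y, ¬ ((2 : ℝ) ^ j ≤ 2 * √(1 + y ^ 2) ∧ √(1 + y ^ 2) ≤ 4 * 2 ^ j) → ψ j (((2 : ℝ) ^ j)⁻¹ * y) = 0) ∧
    (∀ (M : ℕ) (y : ℝ), |y| ≤ 2 ^ M → ∑ j ∈ Finset.range (M + 1), ψ j (((2 : ℝ) ^ j)⁻¹ * y) = 1) := by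
  obtain ⟨χ, hc, hs, h1, h0⟩ := qc_bump
  have hcd : ContDiff ℝ 3 (fun x => χ x - χ (2 * x)) := hc.sub (hc.comp (by fun_prop))
  have hsd : HasCompactSupport (fun x => χ x - χ (2 * x)) := by
    refine HasCompactSupport.of_support_subset_isCompact (isCompact_closedBall (0 : ℝ) 2) ?_
    intro x hx
    by_contra hcon
    apply hx
    simp only [Metric.mem_closedBall, dist_zero_right, Real.norm_eq_abs, not_le] at hcon
    have : χ (2 * x) = 0 := h0 _ (by rw [abs_mul, abs_two]; linarith)
    simp [this, h0 x hcon.le]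
  obtain ⟨K1, hK1, hb1⟩ := qc_bdd χ hc hs
  obtain ⟨K2, hK2, hb2⟩ := qc_bdd _ hcd hsd
  refine ⟨fun j => if j = 0 then χ else fun x => χ x - χ (2 * x), K1 + K2, by positivity, ?_, ?_, ?_, ?_⟩
  · intro j
    dsimp only
    split_ifs <;> assumption
  · intro j k hk x
    dsimp only
    split_ifs
    · linarith [hb1 k hk x]
    · linarith [hb2 k hk x]
  · intro j y h
    have hw1 : |y| ≤ √(1 + y ^ 2) := Real.abs_le_sqrt (by linarith)
    have hw2 : 1 ≤ √(1 + y ^ 2) := Real.one_le_sqrt.2 (by nlinarith [sq_nonneg y])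
    have hw3 : √(1 + y ^ 2) ≤ 1 + |y| := by
      rw [Real.sqrt_le_left (by positivity)]
      nlinarith [sq_abs y, abs_nonneg y]
    have hp : (1 : ℝ) ≤ 2 ^ j := one_le_pow₀ (by norm_num)
    have hp0 : (0 : ℝ) < 2 ^ j := by positivity
    have habs : |((2 : ℝ) ^ j)⁻¹ * y| = |y| / 2 ^ j := by
      rw [abs_mul, abs_of_pos (by positivity)]; field_simp
    have hbig : 2 * 2 ^ j ≤ |y| → χ (((2 : ℝ) ^ j)⁻¹ * y) = 0 := fun hy =>
      h0 _ (by rw [habs, le_div_iff₀ hp0]; exact hy)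
    dsimp only
    split_ifs with hj
    · subst hj
      apply hbig
      by_contra hcon
      apply h
      constructor <;> linarith
    · by_cases hy : 2 * 2 ^ j ≤ |y|
      · have : χ (2 * (((2 : ℝ) ^ j)⁻¹ * y)) = 0 := h0 _ (by
          rw [abs_mul, habs, abs_two, ← mul_div_assoc, le_div_iff₀ hp0]; linarith [abs_nonneg y])
        beta_reduce
        rw [hbig hy, this, sub_zero]
      · have hlt : 2 * |y| < 2 ^ j := by
          by_contra hcon
          apply h
          constructor <;> linarith
        beta_reduce
        rw [h1, h1, sub_self]
        · rw [abs_mul, habs, abs_two, ← mul_div_assoc, div_le_one hp0]; exact hlt.le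
        · rw [habs, div_le_one hp0]; linarith [abs_nonneg y]
  · intro M y hy
    have key : ∀ M : ℕ, ∑ j ∈ Finset.range (M + 1),
        (if j = 0 then χ else fun x => χ x - χ (2 * x)) (((2 : ℝ) ^ j)⁻¹ * y) = χ (((2 : ℝ) ^ M)⁻¹ * y) := by
      intro M
      induction M with
      | zero => simp
      | succ M ih =>
        rw [Finset.sum_range_succ, ih]
        have : 2 * (((2 : ℝ) ^ (M + 1))⁻¹ * y) = ((2 : ℝ) ^ M)⁻¹ * y := by
          rw [pow_succ]; field_simp
        simp [this]
    rw [key]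
    apply h1
    rw [abs_mul, abs_of_pos (by positivity), inv_mul_le_iff₀ (by positivity)]
    linarith

/-- For `n ≥ 3` there is a constant `C = C(n)` such that for all bounded self-adjoint
operators `A, B`, every bounded operator `J` on a complex Hilbert space, and every
compactly supported `f ∈ Cⁿ(ℝ)`, one has `‖f(A)J − Jf(B)‖ ≤ C N_n(f) ‖AJ − JB‖`. -/
theorem quasi_commutator_functional_bound (n : ℕ) (hn : 3 ≤ n) :
    ∃ C : ℝ, ∀ (H : Type*) [NormedAddCommGroup H] [InnerProductSpace ℂ H] [CompleteSpace H]
      (A B J : H →L[ℂ] H) (f : ℝ → ℝ),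
      IsSelfAdjoint A → IsSelfAdjoint B →
      ContDiff ℝ n f → HasCompactSupport f →
      ‖cfc f A * J - J * cfc f B‖ ≤ C * Nseminorm n f * ‖A * J - J * B‖ := by
  obtain ⟨ψ, K, hK0, hψ, hK, hz, hsum⟩ := qc_cutoffs
  refine ⟨4 * (256 * K), fun H _ _ _ A B J f hA hB hfn hs => ?_⟩
  have hf : ContDiff ℝ 3 f := hfn.of_le (by exact_mod_cast hn)
  -- choose M
  obtain ⟨r, hr⟩ := hs.isCompact.isBounded.subset_closedBall (0 : ℝ)
  obtain ⟨M, hM⟩ := pow_unbounded_of_one_lt r (one_lt_two (α := ℝ))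
  set p : ℕ → ℝ → ℝ := fun j y => f y * ψ j (((2 : ℝ) ^ j)⁻¹ * y) with hp
  have hpc : ∀ j, ContDiff ℝ 3 (p j) := fun j => hf.mul ((hψ j).comp (by fun_prop))
  have hps : ∀ j, HasCompactSupport (p j) := fun j => hs.mul_right
  have hfp : f = ∑ j ∈ Finset.range (M + 1), p j := by
    ext y
    rw [Finset.sum_apply]
    simp only [hp]
    rw [← Finset.mul_sum]
    by_cases hy : f y = 0
    · simp [hy]
    · have : y ∈ Metric.closedBall (0 : ℝ) r := hr (subset_tsupport f hy)
      rw [hsum M y, mul_one]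
      simp at this
      linarith
  have hcf : ∀ X : H →L[ℂ] H, cfc f X = ∑ j ∈ Finset.range (M + 1), cfc (p j) X := by
    intro X
    conv_lhs => rw [hfp]
    exact cfc_sum _ _ _ (fun j _ => (hpc j).continuous.continuousOn)
  have hid : ∀ j, ∀ k : ℕ, k ≤ 3 → Integrable (fun x => |iteratedDeriv k (p j) x|) := fun j k hk =>
    (((hpc j).continuous_iteratedDeriv k (by exact_mod_cast hk)).integrable_of_hasCompactSupport
      (qc_hcs _ (hps j) k)).abs
  set W : ℝ → ℝ := fun x => (∑ l ∈ Finset.range (n + 1),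
      |iteratedDeriv l f x| * Real.sqrt (1 + x ^ 2) ^ ((l : ℤ) - (n : ℤ))) *
    Real.sqrt (1 + x ^ 2) ^ ((n : ℤ) - 2) with hW
  have hwpos : ∀ x : ℝ, √(1 + x ^ 2) ≠ 0 := fun x => by positivity
  have hWeq : ∀ x, W x = ∑ l ∈ Finset.range (n + 1), |iteratedDeriv l f x| * √(1 + x ^ 2) ^ ((l : ℤ) - 2) := by
    intro x
    simp only [hW]
    rw [Finset.sum_mul]
    refine Finset.sum_congr rfl fun l _ => ?_
    rw [mul_assoc, ← zpow_add₀ (hwpos x)]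
    congr 2
    ring
  have hWint : Integrable W := by
    rw [funext hWeq]
    refine integrable_finsetSum _ fun l hl => ?_
    have hl' : l ≤ n := by simpa [Nat.lt_succ_iff] using hl
    have hcl := hfn.continuous_iteratedDeriv l (by exact_mod_cast hl')
    have hcw : Continuous (fun x : ℝ => √(1 + x ^ 2) ^ ((l : ℤ) - 2)) :=
      Continuous.zpow₀ (by fun_prop) _ (fun x => Or.inl (hwpos x))
    refine (hcl.abs.mul hcw).integrable_of_hasCompactSupport ?_
    exact ((qc_hcs f hs l).comp_left (g := fun t : ℝ => |t|) abs_zero).mul_right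
  have hGW : ∀ x, ∑ l ∈ Finset.range 4, |iteratedDeriv l f x| * √(1 + x ^ 2) ^ ((l : ℤ) - 2) ≤ W x := by
    intro x
    rw [hWeq]
    refine Finset.sum_le_sum_of_subset_of_nonneg (Finset.range_mono (by omega)) fun l _ _ => by positivity
  have hG0 : ∀ x, 0 ≤ ∑ l ∈ Finset.range 4, |iteratedDeriv l f x| * √(1 + x ^ 2) ^ ((l : ℤ) - 2) :=
    fun x => Finset.sum_nonneg fun l _ => by positivity
  have hI : ∀ j, Integrable (fun x => ((2 : ℝ) ^ j)⁻¹ * |iteratedDeriv 1 (p j) x| +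
      2 ^ j * |iteratedDeriv 3 (p j) x|) := fun j =>
    ((hid j 1 (by norm_num)).const_mul _).add ((hid j 3 (by norm_num)).const_mul _)
  have hb : ∀ j, ‖cfc (p j) A * J - J * cfc (p j) B‖ ≤
      (∫ x, (((2 : ℝ) ^ j)⁻¹ * |iteratedDeriv 1 (p j) x| + 2 ^ j * |iteratedDeriv 3 (p j) x|)) *
        ‖A * J - J * B‖ := by
    intro j
    rw [integral_add ((hid j 1 (by norm_num)).const_mul _) ((hid j 3 (by norm_num)).const_mul _),
      integral_const_mul, integral_const_mul]
    exact qc_base A B J hA hB (p j) (hpc j) (hps j) (2 ^ j) (by positivity)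
  have hfin : ∑ j ∈ Finset.range (M + 1), (∫ x, (((2 : ℝ) ^ j)⁻¹ * |iteratedDeriv 1 (p j) x| +
      2 ^ j * |iteratedDeriv 3 (p j) x|)) ≤ 4 * (256 * K) * ∫ x, W x := by
    rw [← integral_finsetSum _ (fun j _ => hI j), ← integral_const_mul]
    refine integral_mono (integrable_finsetSum _ fun j _ => hI j) (hWint.const_mul _) fun x => ?_
    calc _ ≤ ∑ j ∈ Finset.range (M + 1), _ :=
          Finset.sum_le_sum fun j _ => qc_piece f (ψ j) hf (hψ j) K hK0 (hK j) (2 ^ j) (by positivity) (hz j) x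
      _ ≤ 4 * (256 * K * ∑ l ∈ Finset.range 4, |iteratedDeriv l f x| * √(1 + x ^ 2) ^ ((l : ℤ) - 2)) :=
          qc_count _ _ (mul_nonneg (by positivity) (hG0 x)) _
      _ ≤ 4 * (256 * K * W x) := by gcongr; exact hGW x
      _ = _ := by ring
  rw [hcf A, hcf B, Finset.sum_mul, Finset.mul_sum, ← Finset.sum_sub_distrib]
  calc _ ≤ ∑ j ∈ Finset.range (M + 1), ‖cfc (p j) A * J - J * cfc (p j) B‖ := norm_sum_le _ _
    _ ≤ ∑ j ∈ Finset.range (M + 1), (∫ x, (((2 : ℝ) ^ j)⁻¹ * |iteratedDeriv 1 (p j) x| +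
          2 ^ j * |iteratedDeriv 3 (p j) x|)) * ‖A * J - J * B‖ := Finset.sum_le_sum fun j _ => hb j
    _ ≤ _ := by
      rw [← Finset.sum_mul]
      exact mul_le_mul_of_nonneg_right hfin (norm_nonneg _)
end

section
/- Let n ≥ 3 be an integer. There is a constant C, depending only on n, with the following property: for every complex Hilbert space H, every bounded self-adjoint operator A on H, every orthogonal projection P on H, every bounded operator J on H with [P, J] = 0, and every compactly supported f ∈ Cⁿ(ℝ), one has ‖J 𝒟(A,P;f)‖ + ‖𝒟(A,P;f) J‖ ≤ C · N_n(f) · (‖J P A (I−P)‖ + ‖[A, J]‖), where all norms are operator norms. -/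
open scoped BigOperators

/-- `𝒟(A, P; f) = P f(PAP) P − P f(A) P`, with `f(·)` the continuous functional calculus. -/
noncomputable def Dop {H : Type*} [NormedAddCommGroup H] [InnerProductSpace ℂ H]
    [CompleteSpace H] (A P : H →L[ℂ] H) (f : ℝ → ℝ) : H →L[ℂ] H :=
  P * cfc f (P * A * P) * P - P * cfc f A * P

section opaux
variable {H : Type*} [NormedAddCommGroup H] [InnerProductSpace ℂ H] [CompleteSpace H]

noncomputable def UU (A : H →L[ℂ] H) (t : ℝ) : H →L[ℂ] H := NormedSpace.exp (t • (Complex.I • A))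

lemma UU_zero (A : H →L[ℂ] H) : UU A 0 = 1 := by simp [UU]

lemma UU_unitary {A : H →L[ℂ] H} (hA : IsSelfAdjoint A) (t : ℝ) : UU A t ∈ unitary (H →L[ℂ] H) := by
  have h := (selfAdjoint.expUnitary (t • (⟨A, hA⟩ : selfAdjoint (H →L[ℂ] H)))).2
  rw [selfAdjoint.expUnitary_coe] at h
  rw [UU, smul_comm]
  exact h

lemma UU_neg (A : H →L[ℂ] H) (t : ℝ) : UU A t * UU A (-t) = 1 := by
  let _ : NormedAlgebra ℚ (H →L[ℂ] H) := NormedAlgebra.restrictScalars ℚ ℂ _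
  rw [UU, UU, neg_smul]
  rw [← NormedSpace.exp_add_of_commute ((Commute.refl _).neg_right)]
  simp

lemma UU_deriv (A : H →L[ℂ] H) (t : ℝ) :
    HasDerivAt (UU A) ((Complex.I • A) * UU A t) t := hasDerivAt_exp_smul_const' _ _

lemma UU_deriv_neg (A : H →L[ℂ] H) (t : ℝ) :
    HasDerivAt (fun t => UU A (-t)) (-(UU A (-t) * (Complex.I • A))) t := by
  have h : HasDerivAt (UU A) (UU A (-t) * (Complex.I • A)) (-t) := hasDerivAt_exp_smul_const _ _
  have h2 := h.scomp t (hasDerivAt_neg t)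
  rw [neg_one_smul] at h2
  exact h2

lemma mv_bound {W W' : ℝ → (H →L[ℂ] H)} {C : ℝ} (h : ∀ t, HasDerivAt W (W' t) t)
    (hC : ∀ t, ‖W' t‖ ≤ C) (t : ℝ) : ‖W t - W 0‖ ≤ C * |t| := by
  have := Convex.norm_image_sub_le_of_norm_hasDerivWithin_le (s := Set.univ) (x := 0) (y := t)
    (fun x _ => (h x).hasDerivWithinAt) (fun x _ => hC x) convex_univ trivial trivial
  simpa using this

lemma proj_norm {P : H →L[ℂ] H} (hP : IsSelfAdjoint P) (hP2 : IsIdempotentElem P) : ‖P‖ ≤ 1 := by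
  exact IsStarProjection.norm_le P ⟨hP2, hP⟩

lemma UU_norm_mul {A : H →L[ℂ] H} (hA : IsSelfAdjoint A) (t : ℝ) (X : H →L[ℂ] H) :
    ‖UU A t * X‖ = ‖X‖ := CStarRing.norm_mem_unitary_mul _ (UU_unitary hA t)
lemma UU_mul_norm {A : H →L[ℂ] H} (hA : IsSelfAdjoint A) (t : ℝ) (X : H →L[ℂ] H) :
    ‖X * UU A t‖ = ‖X‖ := CStarRing.norm_mul_mem_unitary _ (UU_unitary hA t)

lemma comm_UU {A : H →L[ℂ] H} (hA : IsSelfAdjoint A) (J : H →L[ℂ] H) (t : ℝ) :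
    ‖J * UU A t - UU A t * J‖ ≤ ‖A * J - J * A‖ * |t| := by
  have h1 : ∀ t, HasDerivAt (fun t => UU A (-t) * (J * UU A t))
      (UU A (-t) * ((Complex.I • (J * A - A * J)) * UU A t)) t := by
    intro t
    have := (UU_deriv_neg A t).mul ((UU_deriv A t).const_mul J)
    refine this.congr_deriv ?_
    simp only [smul_mul_assoc, mul_smul_comm, ← smul_neg, ← smul_add]
    congr 1
    noncomm_ring
  have h2 := mv_bound h1 (C := ‖A * J - J * A‖) (fun t => by
    rw [UU_norm_mul hA, UU_mul_norm hA, norm_smul, Complex.norm_I, one_mul, norm_sub_rev]) t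
  simp only [neg_zero, UU_zero, mul_one, one_mul] at h2
  rw [← UU_norm_mul hA t, mul_sub, ← mul_assoc (UU A t), UU_neg, one_mul] at h2
  exact h2

lemma PXP_norm {P : H →L[ℂ] H} (hP : ‖P‖ ≤ 1) (X : H →L[ℂ] H) : ‖P * X * P‖ ≤ ‖X‖ := by
  calc ‖P * X * P‖ ≤ ‖P‖ * ‖X‖ * ‖P‖ := (norm_mul_le _ _).trans (by gcongr; exact norm_mul_le _ _)
    _ ≤ 1 * ‖X‖ * 1 := by gcongr
    _ = ‖X‖ := by ring

noncomputable def DU (A P : H →L[ℂ] H) (t : ℝ) : H →L[ℂ] H :=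
  P * UU (P * A * P) t * P - P * UU A t * P

lemma UU_norm {A : H →L[ℂ] H} (hA : IsSelfAdjoint A) (t : ℝ) : ‖UU A t‖ ≤ 1 := by
  rw [← mul_one (UU A t), UU_norm_mul hA]
  exact ContinuousLinearMap.norm_id_le

lemma JD_bound {A P J : H →L[ℂ] H} (hA : IsSelfAdjoint A) (hP : IsSelfAdjoint P)
    (hP2 : IsIdempotentElem P) (hJ : P * J - J * P = 0) (t : ℝ) :
    ‖J * DU A P t‖ ≤ (‖J * P * A * (1 - P)‖ + 2 * ‖A * J - J * A‖) * |t| := by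
  have hPn := proj_norm hP hP2
  have hJ' : P * J = J * P := sub_eq_zero.mp hJ
  have hP2' : P * P = P := hP2
  have hB : IsSelfAdjoint (P * A * P) := by
    have := hA.conjugate P
    rwa [hP.star_eq] at this
  have hD : ∀ t, ‖DU A P t‖ ≤ 2 := fun t => by
    have h1 := (PXP_norm hPn (UU (P * A * P) t)).trans (UU_norm hB t)
    have h2 := (PXP_norm hPn (UU A t)).trans (UU_norm hA t)
    exact (norm_sub_le _ _).trans (by linarith)
  have e1 : J * (P * A * P) - (P * A * P) * J = P * (J * A - A * J) * P := by
    have : P * (J * A - A * J) * P = (P * J) * A * P - P * A * (J * P) := by noncomm_ring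
    rw [this, ← hJ']; nth_rewrite 1 [hJ']; noncomm_ring
    
  have h1 : ∀ t, HasDerivAt (fun t => UU (P * A * P) (-t) * (J * DU A P t))
      (UU (P * A * P) (-t) * (Complex.I • (P * (J * A - A * J) * P * DU A P t -
        J * P * A * (1 - P) * UU A t * P))) t := by
    intro t
    have hd : HasDerivAt (DU A P) (P * ((Complex.I • (P * A * P)) * UU (P * A * P) t) * P
        - P * ((Complex.I • A) * UU A t) * P) t :=
      (((UU_deriv (P * A * P) t).const_mul P).mul_const P).sub
        (((UU_deriv A t).const_mul P).mul_const P)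
    refine ((UU_deriv_neg (P * A * P) t).mul (hd.const_mul J)).congr_deriv ?_
    rw [← e1]
    simp only [smul_mul_assoc, mul_smul_comm, ← smul_neg, ← smul_add, ← smul_sub]
    congr 1
    rw [neg_mul, mul_assoc (UU (P * A * P) (-t)), neg_add_eq_sub, ← mul_sub]
    congr 1
    have e2 : P * A * P * DU A P t = P * A * P * UU (P * A * P) t * P - P * A * P * UU A t * P := by
      rw [DU, mul_sub]
      congr 1 <;> simp only [← mul_assoc] <;> rw [mul_assoc (P * A) P P, hP2']
    have e3 : P * (P * A * P * UU (P * A * P) t) * P = P * A * P * UU (P * A * P) t * P := by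
      simp only [← mul_assoc]; rw [hP2']
    rw [sub_mul, mul_assoc J, mul_assoc _ J, e2, e3]
    noncomm_ring
  have h2 := mv_bound h1 (C := ‖J * P * A * (1 - P)‖ + 2 * ‖A * J - J * A‖) (fun t => by
    rw [UU_norm_mul hB, norm_smul, Complex.norm_I, one_mul]
    refine (norm_sub_le _ _).trans ?_
    rw [add_comm]
    gcongr
    · refine (norm_mul_le _ _).trans ?_
      rw [UU_mul_norm hA]
      exact mul_le_of_le_one_right (norm_nonneg _) hPn
    · refine (norm_mul_le _ _).trans ?_
      rw [mul_comm]
      gcongr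
      · exact hD t
      · rw [norm_sub_rev (A * J)]; exact PXP_norm hPn _) t
  have h0 : DU A P 0 = 0 := by simp [DU, UU_zero]
  simp only [neg_zero, h0, mul_zero, sub_zero] at h2
  rwa [UU_norm_mul hB] at h2

lemma DU_total {A P J : H →L[ℂ] H} (hA : IsSelfAdjoint A) (hP : IsSelfAdjoint P)
    (hP2 : IsIdempotentElem P) (hJ : P * J - J * P = 0) (t : ℝ) :
    ‖J * DU A P t‖ + ‖DU A P t * J‖ ≤ 6 * (‖J * P * A * (1 - P)‖ + ‖A * J - J * A‖) * |t| := by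
  have hPn := proj_norm hP hP2
  have hJ' : P * J = J * P := sub_eq_zero.mp hJ
  have hB : IsSelfAdjoint (P * A * P) := by
    have := hA.conjugate P
    rwa [hP.star_eq] at this
  have e0 : ∀ X, J * (P * X * P) - (P * X * P) * J = P * (J * X - X * J) * P := by
    intro X
    have : P * (J * X - X * J) * P = (P * J) * X * P - P * X * (J * P) := by noncomm_ring
    rw [this, ← hJ']; nth_rewrite 1 [hJ']; noncomm_ring
  have c1 := (PXP_norm hPn _).trans (comm_UU hA J t)
  have c2 := (PXP_norm hPn _).trans (comm_UU hB J t)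
  have c3 : ‖P * A * P * J - J * (P * A * P)‖ ≤ ‖A * J - J * A‖ := by
    rw [norm_sub_rev, e0, norm_sub_rev (A * J)]; exact PXP_norm hPn _
  have c4 : ‖P * A * P * J - J * (P * A * P)‖ * |t| ≤ ‖A * J - J * A‖ * |t| := by gcongr
  have c5 : ‖J * DU A P t - DU A P t * J‖ ≤ 2 * ‖A * J - J * A‖ * |t| := by
    have : J * DU A P t - DU A P t * J = P * (J * UU (P * A * P) t - UU (P * A * P) t * J) * P
        - P * (J * UU A t - UU A t * J) * P := by
      rw [← e0, ← e0, DU]; noncomm_ring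
    rw [this]
    exact (norm_sub_le _ _).trans (by linarith)
  have c6 := JD_bound hA hP hP2 hJ t
  have c7 : ‖DU A P t * J‖ ≤ ‖J * DU A P t‖ + ‖J * DU A P t - DU A P t * J‖ := by
    have := norm_sub_le (J * DU A P t) (J * DU A P t - DU A P t * J)
    simpa using this
  have c8 : 0 ≤ ‖J * P * A * (1 - P)‖ * |t| := by positivity
  nlinarith
end opaux

section fou
open MeasureTheory FourierTransform
lemma int_kap (w : ℝ) (hw : 0 < w) :
    Integrable (fun t : ℝ => (1 + t ^ 2 * w ^ 2)⁻¹) ∧ ∫ t : ℝ, (1 + t ^ 2 * w ^ 2)⁻¹ = Real.pi / w := by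
  have e : (fun t : ℝ => (1 + t ^ 2 * w ^ 2)⁻¹) = fun t => (fun u : ℝ => (1 + u ^ 2)⁻¹) (t * w) := by
    ext t; simp [mul_pow]
  rw [e]
  refine ⟨integrable_inv_one_add_sq.comp_mul_right' hw.ne', ?_⟩
  rw [Measure.integral_comp_mul_right (fun u : ℝ => (1 + u ^ 2)⁻¹), integral_univ_inv_one_add_sq,
    abs_of_pos (by positivity)]
  simp [div_eq_inv_mul]

noncomputable def kap (t x : ℝ) : ℝ := (1 + t ^ 2 * (1 + x ^ 2))⁻¹

lemma kap_pos (t x : ℝ) : 0 < kap t x := by unfold kap; positivity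
lemma kap_le (t x : ℝ) : kap t x ≤ 1 := by
  unfold kap; exact inv_le_one_of_one_le₀ (by nlinarith [mul_nonneg (sq_nonneg t) (by positivity : 0 ≤ 1 + x ^ 2)])
lemma kap_mul (t x : ℝ) : kap t x * (1 + t ^ 2 * (1 + x ^ 2)) = 1 := by
  unfold kap; exact inv_mul_cancel₀ (by positivity)
lemma kap_deriv (t x : ℝ) : HasDerivAt (kap t) (-(2 * t ^ 2 * x * kap t x ^ 2)) x := by
  have h : HasDerivAt (fun x : ℝ => 1 + t ^ 2 * (1 + x ^ 2)) (2 * t ^ 2 * x) x := by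
    have := (((hasDerivAt_pow 2 x).const_add 1).const_mul (t ^ 2)).const_add 1
    refine this.congr_deriv ?_
    simp; ring
  have h2 := h.inv (by positivity)
  refine h2.congr_deriv ?_
  unfold kap
  field_simp
lemma kap_cont : Continuous (Function.uncurry kap) := by
  unfold kap Function.uncurry
  refine Continuous.inv₀ (by fun_prop) (fun p => by positivity)
lemma kap_cont' (t : ℝ) : Continuous (kap t) := kap_cont.comp (by fun_prop : Continuous fun x => (t, x))

lemma m_deriv (t x : ℝ) : HasDerivAt (fun x => (1 + x ^ 2) * kap t x) (2 * x * kap t x ^ 2) x := by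
  have h := ((hasDerivAt_pow 2 x).const_add 1).mul (kap_deriv t x)
  refine h.congr_deriv ?_
  have := kap_mul t x
  simp only [Nat.cast_ofNat, Nat.add_one_sub_one, pow_one]
  linear_combination (-2 * x * kap t x) * this

lemma m_deriv2 (t x : ℝ) : HasDerivAt (fun x => 2 * x * kap t x ^ 2)
    (2 * kap t x ^ 2 - 8 * t ^ 2 * x ^ 2 * kap t x ^ 3) x := by
  have h := ((hasDerivAt_id x).const_mul 2).mul ((kap_deriv t x).pow 2)
  refine h.congr_deriv ?_
  simp
  ring

lemma gbound (t x a b c : ℝ) :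
    |a| * kap t x + |c * ((1 + x ^ 2) * kap t x) + 2 * (b * (2 * x * kap t x ^ 2))
      + a * (2 * kap t x ^ 2 - 8 * t ^ 2 * x ^ 2 * kap t x ^ 3)|
    ≤ (11 * |a| + 4 * |b| * √(1 + x ^ 2) + |c| * (1 + x ^ 2)) * kap t x := by
  have hk := kap_pos t x
  have hk1 := kap_le t x
  have hm := kap_mul t x
  set k := kap t x
  have hx : |x| ≤ √(1 + x ^ 2) := Real.abs_le_sqrt (by linarith)
  have hkk : k ^ 2 ≤ k := by nlinarith
  have htx : 0 ≤ t ^ 2 * x ^ 2 * k ∧ t ^ 2 * x ^ 2 * k ≤ 1 := by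
    constructor
    · positivity
    · nlinarith [mul_nonneg (sq_nonneg t) hk.le]
  have h1 : |c * ((1 + x ^ 2) * k)| = |c| * (1 + x ^ 2) * k := by
    rw [abs_mul, abs_of_pos (by positivity : 0 < (1 + x ^ 2) * k)]; ring
  have h2 : |2 * (b * (2 * x * k ^ 2))| ≤ 4 * |b| * √(1 + x ^ 2) * k := by
    have : |2 * (b * (2 * x * k ^ 2))| = 4 * |b| * |x| * k ^ 2 := by
      simp only [abs_mul, abs_two, abs_pow, abs_of_pos hk]; ring
    rw [this]; gcongr
  have h3 : |2 * k ^ 2 - 8 * t ^ 2 * x ^ 2 * k ^ 3| ≤ 10 * k := by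
    have e : 2 * k ^ 2 - 8 * t ^ 2 * x ^ 2 * k ^ 3 = k ^ 2 * (2 - 8 * (t ^ 2 * x ^ 2 * k)) := by ring
    rw [e, abs_mul, abs_of_nonneg (by positivity : 0 ≤ k ^ 2)]
    have : |2 - 8 * (t ^ 2 * x ^ 2 * k)| ≤ 10 := by rw [abs_le]; constructor <;> linarith [htx.1, htx.2]
    calc _ ≤ k * 10 := by gcongr
      _ = _ := by ring
  have h4 : |a * (2 * k ^ 2 - 8 * t ^ 2 * x ^ 2 * k ^ 3)| ≤ |a| * (10 * k) := by
    rw [abs_mul]; gcongr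
  have h5 := abs_add_three (c * ((1 + x ^ 2) * k)) (2 * (b * (2 * x * k ^ 2))) (a * (2 * k ^ 2 - 8 * t ^ 2 * x ^ 2 * k ^ 3))
  rw [h1] at h5
  linarith

lemma fourier_norm_le (g : ℝ → ℂ) (t : ℝ) : ‖𝓕 g t‖ ≤ ∫ x, ‖g x‖ := by
  exact VectorFourier.norm_fourierIntegral_le_integral_norm _ _ _ _ _

lemma pointwise {g g1 g2 : ℝ → ℝ} (h1 : ∀ x, HasDerivAt g (g1 x) x) (h2 : ∀ x, HasDerivAt g1 (g2 x) x)
    (hc : Continuous g2) (s0 : HasCompactSupport g) (s1 : HasCompactSupport g1)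
    (s2 : HasCompactSupport g2) (t : ℝ) :
    ‖𝓕 (fun x => (g x : ℂ)) t‖ ≤ ∫ x, (11 * |g x| + 4 * |g1 x| * √(1 + x ^ 2) + |g2 x| * (1 + x ^ 2)) * kap t x := by
  have c0 : Continuous g := continuous_iff_continuousAt.2 fun x => (h1 x).continuousAt
  have c1 : Continuous g1 := continuous_iff_continuousAt.2 fun x => (h2 x).continuousAt
  have ck := kap_cont' t
  set p : ℝ → ℝ := fun x => g x * ((1 + x ^ 2) * kap t x) with hp
  set p1 : ℝ → ℝ := fun x => g1 x * ((1 + x ^ 2) * kap t x) + g x * (2 * x * kap t x ^ 2) with hp1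
  set p2 : ℝ → ℝ := fun x => g2 x * ((1 + x ^ 2) * kap t x) + 2 * (g1 x * (2 * x * kap t x ^ 2))
      + g x * (2 * kap t x ^ 2 - 8 * t ^ 2 * x ^ 2 * kap t x ^ 3) with hp2
  have d1 : ∀ x, HasDerivAt p (p1 x) x := fun x => (h1 x).mul (m_deriv t x)
  have d2 : ∀ x, HasDerivAt p1 (p2 x) x := fun x =>
    (((h2 x).mul (m_deriv t x)).add ((h1 x).mul (m_deriv2 t x))).congr_deriv (by simp only [hp2]; ring)
  have i0 : Integrable p := Continuous.integrable_of_hasCompactSupport (by fun_prop) s0.mul_right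
  have i1 : Integrable p1 := Continuous.integrable_of_hasCompactSupport (by fun_prop)
    (HasCompactSupport.add s1.mul_right s0.mul_right)
  have i2 : Integrable p2 := Continuous.integrable_of_hasCompactSupport (by fun_prop)
    (HasCompactSupport.add (HasCompactSupport.add s2.mul_right (s1.mul_right.mul_left)) s0.mul_right)
  have ik : Integrable (fun x => g x * kap t x) :=
    Continuous.integrable_of_hasCompactSupport (by fun_prop) s0.mul_right
  have iG : Integrable (fun x => (11 * |g x| + 4 * |g1 x| * √(1 + x ^ 2) + |g2 x| * (1 + x ^ 2)) * kap t x) := by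
    refine Continuous.integrable_of_hasCompactSupport (by fun_prop) ?_
    refine HasCompactSupport.mul_right ?_
    exact HasCompactSupport.add (HasCompactSupport.add s0.abs.mul_left (s1.abs.mul_left.mul_right)) s2.abs.mul_right
  have D1 : ∀ x, HasDerivAt (fun x => (p x : ℂ)) (p1 x : ℂ) x := fun x => (d1 x).ofReal_comp
  have D2 : ∀ x, HasDerivAt (fun x => (p1 x : ℂ)) (p2 x : ℂ) x := fun x => (d2 x).ofReal_comp
  have E1 : deriv (fun x => (p x : ℂ)) = fun x => (p1 x : ℂ) := funext fun x => (D1 x).deriv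
  have E2 : deriv (fun x => (p1 x : ℂ)) = fun x => (p2 x : ℂ) := funext fun x => (D2 x).deriv
  have F1 := congrFun (Real.fourier_deriv (f := fun x => (p x : ℂ)) i0.ofReal (fun x => (D1 x).differentiableAt)
    (by rw [E1]; exact i1.ofReal)) t
  have F2 := congrFun (Real.fourier_deriv (f := fun x => (p1 x : ℂ)) i1.ofReal (fun x => (D2 x).differentiableAt)
    (by rw [E2]; exact i2.ofReal)) t
  rw [E1] at F1
  rw [E2, F1] at F2
  have key : 𝓕 (fun x => (g x : ℂ)) t = 𝓕 (fun x => ((g x * kap t x : ℝ) : ℂ)) t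
      + (t : ℂ) ^ 2 * 𝓕 (fun x => (p x : ℂ)) t := by
    have : (fun x => (g x : ℂ)) = (fun x => ((g x * kap t x : ℝ) : ℂ)) + (t ^ 2 : ℂ) • (fun x => (p x : ℂ)) := by
      ext x
      have := kap_mul t x
      simp only [Pi.add_apply, Pi.smul_apply, smul_eq_mul, hp]
      norm_cast
      linear_combination (- g x) * this
    rw [this]
    rw [Real.fourier_eq, Real.fourier_eq, Real.fourier_eq, ← smul_eq_mul, ← integral_smul, ← integral_add]
    · congr 1; ext x; simp only [Pi.add_apply, Pi.smul_apply, smul_add]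
      rw [smul_comm]
    · exact (Real.fourierIntegral_convergent_iff t).2 ik.ofReal
    · exact Integrable.smul (t ^ 2 : ℂ) ((Real.fourierIntegral_convergent_iff (f := fun x => (p x : ℂ)) t).2 i0.ofReal)
  have F3 : ‖(t : ℂ) ^ 2 * 𝓕 (fun x => (p x : ℂ)) t‖ ≤ ∫ x, |p2 x| := by
    have := fourier_norm_le (fun x => (p2 x : ℂ)) t
    simp only [Complex.norm_real, Real.norm_eq_abs] at this
    refine le_trans ?_ this
    rw [F2]
    simp only [smul_eq_mul, norm_mul, norm_pow, Complex.norm_I, Complex.norm_real, Real.norm_eq_abs, abs_of_pos Real.pi_pos,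
      Complex.norm_ofNat, mul_one]
    have hpi : 1 ≤ 2 * Real.pi := by linarith [Real.pi_gt_three]
    have h0 : 0 ≤ |t| ^ 2 * ‖𝓕 (fun x => (p x : ℂ)) t‖ := by positivity
    calc _ ≤ (2 * Real.pi) ^ 2 * (|t| ^ 2 * ‖𝓕 (fun x => (p x : ℂ)) t‖) := 
          le_mul_of_one_le_left h0 (one_le_pow₀ hpi)
      _ = _ := by ring
  have F4 : ‖𝓕 (fun x => ((g x * kap t x : ℝ) : ℂ)) t‖ ≤ ∫ x, |g x| * kap t x := by
    have := fourier_norm_le (fun x => ((g x * kap t x : ℝ) : ℂ)) t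
    simpa only [Complex.norm_real, Real.norm_eq_abs, abs_mul, abs_of_pos (kap_pos _ _)] using this
  have ik' : Integrable (fun x => |g x| * kap t x) := by
    have := ik.abs
    simpa only [abs_mul, abs_of_pos (kap_pos _ _)] using this
  rw [key]
  refine (norm_add_le _ _).trans ((add_le_add F4 F3).trans ?_)
  rw [← integral_add ik' i2.abs]
  refine integral_mono (ik'.add i2.abs) iG fun x => ?_
  exact gbound t x (g x) (g1 x) (g2 x)

lemma fourier_L1 {g g1 g2 : ℝ → ℝ} (h1 : ∀ x, HasDerivAt g (g1 x) x) (h2 : ∀ x, HasDerivAt g1 (g2 x) x)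
    (hc : Continuous g2) (s0 : HasCompactSupport g) (s1 : HasCompactSupport g1)
    (s2 : HasCompactSupport g2) :
    Integrable (𝓕 (fun x => (g x : ℂ))) ∧ ∫ t, ‖𝓕 (fun x => (g x : ℂ)) t‖ ≤
      ∫ x, Real.pi * (11 * |g x| / √(1 + x ^ 2) + 4 * |g1 x| + |g2 x| * √(1 + x ^ 2)) := by
  have c0 : Continuous g := continuous_iff_continuousAt.2 fun x => (h1 x).continuousAt
  have c1 : Continuous g1 := continuous_iff_continuousAt.2 fun x => (h2 x).continuousAt
  have sp : ∀ x : ℝ, 0 < √(1 + x ^ 2) := fun x => Real.sqrt_pos.2 (by positivity)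
  set G : ℝ → ℝ := fun x => 11 * |g x| + 4 * |g1 x| * √(1 + x ^ 2) + |g2 x| * (1 + x ^ 2) with hG
  have cG : Continuous G := by fun_prop
  have sG : HasCompactSupport G := 
    HasCompactSupport.add (HasCompactSupport.add s0.abs.mul_left (s1.abs.mul_left.mul_right)) s2.abs.mul_right
  have G0 : ∀ x, 0 ≤ G x := fun x => by simp only [hG]; positivity
  have hk : ∀ x, Integrable (fun t => kap t x) ∧ ∫ t, kap t x = Real.pi / √(1 + x ^ 2) := by
    intro x
    have := int_kap _ (sp x)
    simpa only [Real.sq_sqrt (by positivity : 0 ≤ 1 + x ^ 2), kap] using this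
  have cGs : Continuous (fun x => G x * (Real.pi / √(1 + x ^ 2))) := by
    refine cG.mul (Continuous.div continuous_const (by fun_prop) fun x => (sp x).ne')
  have iGs : Integrable (fun x => G x * (Real.pi / √(1 + x ^ 2))) :=
    cGs.integrable_of_hasCompactSupport sG.mul_right
  have iprod : Integrable (fun q : ℝ × ℝ => G q.1 * kap q.2 q.1) (volume.prod volume) := by
    rw [integrable_prod_iff]
    · refine ⟨Filter.Eventually.of_forall fun x => (hk x).1.const_mul (G x), ?_⟩
      refine iGs.congr (Filter.Eventually.of_forall fun x => ?_)
      simp only [norm_mul, Real.norm_eq_abs, abs_of_nonneg (G0 x), abs_of_pos (kap_pos _ _)]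
      rw [integral_const_mul, (hk x).2]
    · refine Continuous.aestronglyMeasurable ?_
      exact (cG.comp continuous_fst).mul (kap_cont.comp (by fun_prop : Continuous fun q : ℝ × ℝ => (q.2, q.1)))
  have iswap : Integrable (fun t => ∫ x, G x * kap t x) := iprod.integral_prod_right
  have hF : Integrable (fun x => (g x : ℂ)) := (c0.integrable_of_hasCompactSupport s0).ofReal
  have cF : Continuous (𝓕 (fun x => (g x : ℂ))) := by
    exact VectorFourier.fourierIntegral_continuous Real.continuous_fourierChar (by fun_prop) hF
  have hpt := pointwise h1 h2 hc s0 s1 s2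
  have iF : Integrable (𝓕 (fun x => (g x : ℂ))) := 
    iswap.mono' cF.aestronglyMeasurable (Filter.Eventually.of_forall hpt)
  refine ⟨iF, ?_⟩
  calc _ ≤ ∫ t, ∫ x, G x * kap t x := integral_mono iF.norm iswap hpt
    _ = ∫ x, ∫ t, G x * kap t x := (integral_integral_swap iprod).symm
    _ = _ := by
      congr 1; ext x
      rw [integral_const_mul, (hk x).2]
      have e := Real.sq_sqrt (by positivity : 0 ≤ 1 + x ^ 2)
      have := sp x
      simp only [hG]
      field_simp
      rw [e]
end fou

section main
open MeasureTheory FourierTransform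
variable {H : Type*} [NormedAddCommGroup H] [InnerProductSpace ℂ H] [CompleteSpace H]

lemma cfc_exp_eq {A : H →L[ℂ] H} (hA : IsSelfAdjoint A) (c : ℂ) (t : ℝ) :
    cfc (fun z : ℂ => Complex.exp ((2 * Real.pi * t : ℝ) * z * Complex.I) * c) A
      = c • UU A (2 * Real.pi * t) := by
  have hn : IsStarNormal A := hA.isStarNormal
  have h1 : (fun z : ℂ => Complex.exp ((2 * Real.pi * t : ℝ) * z * Complex.I) * c)
      = fun z => c * (fun z => Complex.exp (((2 * Real.pi * t : ℝ) * Complex.I) • z)) z := by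
    ext z
    simp only [smul_eq_mul]
    rw [mul_comm]
    congr 2; ring
  have hn2 : IsStarNormal ((((2 * Real.pi * t : ℝ) : ℂ) * Complex.I) • A) := inferInstance
  rw [h1, cfc_const_mul _ _ _ (by fun_prop), cfc_comp_smul _ Complex.exp A (by fun_prop) hn,
    CFC.complex_exp_eq_normedSpace_exp hn2, UU, mul_smul]
  rfl

lemma cfc_four {A : H →L[ℂ] H} (hA : IsSelfAdjoint A) {f : ℝ → ℝ} (hf : Continuous f)
    (hi : Integrable f) (hF : Integrable (𝓕 (fun x => (f x : ℂ)))) 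
    (hFc : Continuous (𝓕 (fun x => (f x : ℂ)))) :
    cfc f A = ∫ t, 𝓕 (fun x => (f x : ℂ)) t • UU A (2 * Real.pi * t) := by
  have hn : IsStarNormal A := hA.isStarNormal
  set F := 𝓕 (fun x => (f x : ℂ)) with hFd
  have inv : ∀ x : ℝ, (f x : ℂ) = ∫ t : ℝ, Complex.exp ((2 * Real.pi * t : ℝ) * (x : ℂ) * Complex.I) * F t := by
    intro x
    have h := congrFun (Continuous.fourierInv_fourier_eq (f := fun x => (f x : ℂ)) (by fun_prop) hi.ofReal hF) x
    rw [Real.fourierInv_eq'] at h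
    rw [← h]
    congr 1; ext t
    simp only [smul_eq_mul, RCLike.inner_apply, conj_trivial, hFd]
    congr 2
    push_cast
    ring
  rw [cfc_real_eq_complex f hA]
  have : cfc (fun z : ℂ => (f z.re : ℂ)) A
      = cfc (fun z : ℂ => ∫ t : ℝ, (fun (t : ℝ) (z : ℂ) => Complex.exp ((2 * Real.pi * t : ℝ) * z * Complex.I) * F t) t z) A := by
    refine cfc_congr fun z hz => ?_
    have hz' := hA.mem_spectrum_eq_re hz
    simp only
    rw [inv, ← hz']
  rw [this, cfc_integral _ (fun t => ‖F t‖) A ?_ ?_ hF.norm.2 hn]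
  · congr 1; ext1 t; exact cfc_exp_eq hA _ t
  · refine Continuous.continuousOn ?_
    unfold Function.uncurry
    fun_prop
  · refine Filter.Eventually.of_forall fun t z hz => ?_
    have hz' := hA.mem_spectrum_eq_re hz
    rw [norm_mul, hz', ← Complex.ofReal_mul, Complex.norm_exp_ofReal_mul_I, one_mul]

lemma UU_cont (A : H →L[ℂ] H) : Continuous (UU A) :=
  continuous_iff_continuousAt.2 fun t => (UU_deriv A t).continuousAt

lemma int_FU {A : H →L[ℂ] H} (hA : IsSelfAdjoint A) {F : ℝ → ℂ} (hF : Integrable F) (hFc : Continuous F) :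
    Integrable (fun t => F t • UU A (2 * Real.pi * t)) := by
  refine hF.norm.mono' ?_ (Filter.Eventually.of_forall fun t => ?_)
  · exact (hFc.smul ((UU_cont A).comp (by fun_prop))).aestronglyMeasurable
  · rw [norm_smul]; exact mul_le_of_le_one_right (norm_nonneg _) (UU_norm hA _)

lemma Dop_eq {A P : H →L[ℂ] H} (hA : IsSelfAdjoint A) (hP : IsSelfAdjoint P) {f : ℝ → ℝ} (hf : Continuous f)
    (hi : Integrable f) (hF : Integrable (𝓕 (fun x => (f x : ℂ)))) 
    (hFc : Continuous (𝓕 (fun x => (f x : ℂ)))) :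
    Integrable (fun t => 𝓕 (fun x => (f x : ℂ)) t • DU A P (2 * Real.pi * t)) ∧
    Dop A P f = ∫ t, 𝓕 (fun x => (f x : ℂ)) t • DU A P (2 * Real.pi * t) := by
  have hB : IsSelfAdjoint (P * A * P) := by
    have := hA.conjugate P
    rwa [hP.star_eq] at this
  have i1 := int_FU hA hF hFc
  have i2 := int_FU hB hF hFc
  have j1 := (i1.const_mul P).mul_const P
  have j2 := (i2.const_mul P).mul_const P
  have e : (fun t => 𝓕 (fun x => (f x : ℂ)) t • DU A P (2 * Real.pi * t)) = fun t =>
      P * (𝓕 (fun x => (f x : ℂ)) t • UU (P * A * P) (2 * Real.pi * t)) * P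
      - P * (𝓕 (fun x => (f x : ℂ)) t • UU A (2 * Real.pi * t)) * P := by
    ext1 t
    simp only [DU, smul_sub, mul_smul_comm, smul_mul_assoc]
  rw [e]
  refine ⟨j2.sub j1, ?_⟩
  rw [integral_sub j2 j1, integral_mul_const_of_integrable (i1.const_mul P),
    integral_mul_const_of_integrable (i2.const_mul P), integral_const_mul_of_integrable i1,
    integral_const_mul_of_integrable i2, ← cfc_four hA hf hi hF hFc, ← cfc_four hB hf hi hF hFc, Dop]

lemma Nbound {n : ℕ} (hn : 3 ≤ n) {f : ℝ → ℝ} (hf : ContDiff ℝ n f) (hs : HasCompactSupport f) :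
    ∫ x, Real.pi * (11 * |iteratedDeriv 1 f x| / √(1 + x ^ 2) + 4 * |iteratedDeriv 2 f x|
      + |iteratedDeriv 3 f x| * √(1 + x ^ 2)) ≤ 11 * Real.pi * Nseminorm n f := by
  have sp : ∀ x : ℝ, 0 < √(1 + x ^ 2) := fun x => Real.sqrt_pos.2 (by positivity)
  have ss : ∀ l, HasCompactSupport (iteratedDeriv l f) := fun l => by
    induction l with
    | zero => simpa using hs
    | succ l ih => rw [iteratedDeriv_succ]; exact ih.deriv
  have cc : ∀ l ≤ n, Continuous (iteratedDeriv l f) := fun l hl =>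
    hf.continuous_iteratedDeriv l (by exact_mod_cast hl)
  have cz : ∀ k : ℤ, Continuous (fun x : ℝ => √(1 + x ^ 2) ^ k) := fun k =>
    Continuous.zpow₀ (by fun_prop) k (fun x => Or.inl (sp x).ne')
  have it : ∀ l ≤ n, Integrable (fun x => |iteratedDeriv l f x| * √(1 + x ^ 2) ^ ((l : ℤ) - n) * √(1 + x ^ 2) ^ ((n : ℤ) - 2)) := by
    intro l hl
    exact (((cc l hl).abs.mul (cz _)).mul (cz _)).integrable_of_hasCompactSupport
      ((ss l).abs.mul_right.mul_right)
  rw [Nseminorm, ← integral_const_mul]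
  refine integral_mono_of_nonneg (Filter.Eventually.of_forall fun x => ?_) (Integrable.const_mul ?_ _)
    (Filter.Eventually.of_forall fun x => ?_)
  · have := Real.pi_pos; have := sp x; simp only [Pi.zero_apply]; positivity
  · simp only [Finset.sum_mul]
    exact integrable_finsetSum _ fun l hl => it l (by simpa [Nat.lt_succ_iff] using hl)
  · simp only [Finset.sum_mul]
    have hx := sp x
    have e : ∀ l : ℕ, |iteratedDeriv l f x| * √(1 + x ^ 2) ^ ((l : ℤ) - n) * √(1 + x ^ 2) ^ ((n : ℤ) - 2)
        = |iteratedDeriv l f x| * √(1 + x ^ 2) ^ ((l : ℤ) - 2) := by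
      intro l
      rw [mul_assoc, ← zpow_add₀ hx.ne']
      congr 2; ring
    simp only [e]
    have hsub : ({1, 2, 3} : Finset ℕ) ⊆ Finset.range (n + 1) := by
      intro l hl
      simp at hl ⊢
      omega
    have hle := Finset.sum_le_sum_of_subset_of_nonneg (f := fun l : ℕ => |iteratedDeriv l f x| * √(1 + x ^ 2) ^ ((l : ℤ) - 2)) hsub
      (fun l _ _ => by positivity)
    rw [Finset.sum_insert (by simp), Finset.sum_insert (by simp), Finset.sum_singleton] at hle
    norm_num at hle
    rw [mul_comm 11 Real.pi, mul_assoc]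
    refine mul_le_mul_of_nonneg_left ?_ Real.pi_pos.le
    refine le_trans ?_ (mul_le_mul_of_nonneg_left hle (by norm_num : (0:ℝ) ≤ 11))
    rw [mul_div_assoc, div_eq_mul_inv, iteratedDeriv_one]
    have a1 : 0 ≤ |iteratedDeriv 2 f x| := abs_nonneg _
    have a2 : 0 ≤ |iteratedDeriv 3 f x| * √(1 + x ^ 2) := by positivity
    linarith

lemma final_bound {n : ℕ} (hn : 3 ≤ n) {A P J : H →L[ℂ] H} {f : ℝ → ℝ} (hA : IsSelfAdjoint A)
    (hP : IsSelfAdjoint P) (hP2 : IsIdempotentElem P) (hJ : P * J - J * P = 0)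
    (hf : ContDiff ℝ n f) (hs : HasCompactSupport f) :
    ‖J * Dop A P f‖ + ‖Dop A P f * J‖
        ≤ (66 * Real.pi) * Nseminorm n f * (‖J * P * A * (1 - P)‖ + ‖A * J - J * A‖) := by
  have ss : ∀ l, HasCompactSupport (iteratedDeriv l f) := fun l => by
    induction l with
    | zero => simpa using hs
    | succ l ih => rw [iteratedDeriv_succ]; exact ih.deriv
  have cc : ∀ l ≤ n, Continuous (iteratedDeriv l f) := fun l hl =>
    hf.continuous_iteratedDeriv l (by exact_mod_cast hl)
  have dd : ∀ l < n, ∀ x, HasDerivAt (iteratedDeriv l f) (iteratedDeriv (l + 1) f x) x := by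
    intro l hl x
    rw [iteratedDeriv_succ]
    exact (hf.differentiable_iteratedDeriv l (by exact_mod_cast hl) x).hasDerivAt
  have A0 := fourier_L1 (dd 0 (by omega)) (dd 1 (by omega)) (cc 2 (by omega)) (ss 0) (ss 1) (ss 2)
  have A1 := fourier_L1 (dd 1 (by omega)) (dd 2 (by omega)) (cc 3 (by omega)) (ss 1) (ss 2) (ss 3)
  have B1 := A1.2.trans (Nbound hn hf hs)
  simp only [iteratedDeriv_zero] at A0
  have i0 : Integrable f := hf.continuous.integrable_of_hasCompactSupport hs
  have i1 : Integrable (iteratedDeriv 1 f) := (cc 1 (by omega)).integrable_of_hasCompactSupport (ss 1)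
  have cF : Continuous (𝓕 (fun x => (f x : ℂ))) := by
    exact VectorFourier.fourierIntegral_continuous Real.continuous_fourierChar (by fun_prop) i0.ofReal
  have D1 : ∀ x, HasDerivAt (fun x => (f x : ℂ)) ((iteratedDeriv 1 f x : ℝ) : ℂ) x := fun x => by
    have := dd 0 (by omega) x
    rw [iteratedDeriv_zero] at this
    exact this.ofReal_comp
  have E1 : deriv (fun x => (f x : ℂ)) = fun x => ((iteratedDeriv 1 f x : ℝ) : ℂ) := funext fun x => (D1 x).deriv
  have F1 := Real.fourier_deriv (f := fun x => (f x : ℂ)) i0.ofReal (fun x => (D1 x).differentiableAt)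
    (by rw [E1]; exact i1.ofReal)
  rw [E1] at F1
  obtain ⟨iD, eD⟩ := Dop_eq hA hP hf.continuous i0 A0.1 cF
  set F := 𝓕 (fun x => (f x : ℂ)) with hF
  set S := ‖J * P * A * (1 - P)‖ + ‖A * J - J * A‖ with hS
  have S0 : 0 ≤ S := by positivity
  have iJ := iD.const_mul J
  have iJ' := iD.mul_const J
  rw [eD, ← integral_const_mul_of_integrable iD, ← integral_mul_const_of_integrable iD]
  refine (add_le_add (norm_integral_le_integral_norm _) (norm_integral_le_integral_norm _)).trans ?_
  rw [← integral_add iJ.norm iJ'.norm]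
  have step : ∀ t, ‖J * F t • DU A P (2 * Real.pi * t)‖ + ‖F t • DU A P (2 * Real.pi * t) * J‖
      ≤ 6 * S * ‖𝓕 (fun x => ((iteratedDeriv 1 f x : ℝ) : ℂ)) t‖ := by
    intro t
    rw [mul_smul_comm, smul_mul_assoc, norm_smul, norm_smul, ← mul_add, F1]
    have := DU_total hA hP hP2 hJ (2 * Real.pi * t)
    refine (mul_le_mul_of_nonneg_left this (norm_nonneg _)).trans (le_of_eq ?_)
    simp only [norm_smul, norm_mul, Complex.norm_I, Complex.norm_real, Real.norm_eq_abs, abs_mul, abs_of_pos Real.pi_pos,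
      Complex.norm_ofNat, mul_one, abs_two, hS]
    ring
  refine (integral_mono (iJ.norm.add iJ'.norm) (A1.1.norm.const_mul _) step).trans ?_
  rw [integral_const_mul]
  refine (mul_le_mul_of_nonneg_left B1 (by positivity)).trans (le_of_eq ?_)
  ring
end main

/-- For `n ≥ 3` there is `C = C(n)` such that for every bounded self-adjoint `A`, every
orthogonal projection `P`, every bounded `J` commuting with `P`, and every compactly
supported `f ∈ Cⁿ(ℝ)`:
`‖J 𝒟(A,P;f)‖ + ‖𝒟(A,P;f) J‖ ≤ C N_n(f) (‖J P A (I−P)‖ + ‖[A,J]‖)`. -/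
theorem Dop_one_sided_bound (n : ℕ) (hn : 3 ≤ n) :
    ∃ C : ℝ, ∀ (H : Type*) [NormedAddCommGroup H] [InnerProductSpace ℂ H] [CompleteSpace H]
      (A P J : H →L[ℂ] H) (f : ℝ → ℝ),
      IsSelfAdjoint A → IsSelfAdjoint P → IsIdempotentElem P →
      P * J - J * P = 0 →
      ContDiff ℝ n f → HasCompactSupport f →
      ‖J * Dop A P f‖ + ‖Dop A P f * J‖
        ≤ C * Nseminorm n f * (‖J * P * A * (1 - P)‖ + ‖A * J - J * A‖) := by
  refine ⟨66 * Real.pi, ?_⟩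
  intro H _ _ _ A P J f hA hP hP2 hJ hf hs
  exact final_bound hn hA hP hP2 hJ hf hs
end

section
/- Let n ≥ 2 be an integer. There is a constant C, depending only on n, such that every f ∈ Cⁿ(ℝ) admits a quasi-analytic extension f̃ ∈ C¹(ℝ²; ℂ) with the properties: f̃(x,0) = f(x) for all x ∈ ℝ; f̃(x,y) = 0 whenever |y| > ⟨x⟩; and the Cauchy–Riemann derivative 𝒵(x,y) = ½(∂_x f̃(x,y) + i ∂_y f̃(x,y)) satisfies |𝒵(x,y)| ≤ C · F(x) · |y|^{n−1} for all (x,y) with |y| < ⟨x⟩ (and 𝒵(x,y) = 0 for |y| > ⟨x⟩). -/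
open scoped BigOperators

/-- `F(x) = Σ_{l=0}^n |f^{(l)}(x)| ⟨x⟩^{−n+l}` with `⟨x⟩ = √(1+x²)`. -/
noncomputable def Fweight (n : ℕ) (f : ℝ → ℝ) (x : ℝ) : ℝ :=
  ∑ l ∈ Finset.range (n + 1),
    |iteratedDeriv l f x| * Real.sqrt (1 + x ^ 2) ^ ((l : ℤ) - (n : ℤ))

/-- The Cauchy–Riemann derivative `𝒵 = ∂f̃/∂z̄ = ½(∂_x f̃ + i ∂_y f̃)`. -/
noncomputable def CRderiv (ft : ℝ × ℝ → ℂ) (x y : ℝ) : ℂ :=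
  (1 / 2) * (deriv (fun s : ℝ => ft (s, y)) x + Complex.I * deriv (fun s : ℝ => ft (x, s)) y)

noncomputable def gcut (t : ℝ) : ℝ := Real.smoothTransition (2 - 2 * t)

lemma gcut_contDiff : ContDiff ℝ 1 gcut := by
  unfold gcut
  exact Real.smoothTransition.contDiff.comp (by fun_prop)

lemma gcut_one {t : ℝ} (h : t ≤ 1 / 2) : gcut t = 1 :=
  Real.smoothTransition.one_of_one_le (by linarith)

lemma gcut_zero {t : ℝ} (h : 1 ≤ t) : gcut t = 0 :=
  Real.smoothTransition.zero_of_nonpos (by linarith)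

lemma gcut_abs_le (t : ℝ) : |gcut t| ≤ 1 := by
  unfold gcut
  rw [abs_of_nonneg (Real.smoothTransition.nonneg _)]
  exact Real.smoothTransition.le_one _

lemma gcut_deriv_zero {t : ℝ} (h : t < 1 / 2) : deriv gcut t = 0 := by
  have : gcut =ᶠ[nhds t] fun _ => (1 : ℝ) := by
    filter_upwards [Iio_mem_nhds h] with s hs
    exact gcut_one (le_of_lt hs)
  rw [this.deriv_eq]; simp

lemma gcut_deriv_bdd : ∃ M : ℝ, 0 ≤ M ∧ ∀ t ∈ Set.Icc (0 : ℝ) 1, |deriv gcut t| ≤ M := by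
  obtain ⟨M, hM⟩ := (isCompact_Icc (a := (0 : ℝ)) (b := 1)).exists_bound_of_continuousOn
    (gcut_contDiff.continuous_deriv le_rfl).continuousOn
  exact ⟨M, (norm_nonneg _).trans (hM 0 (by simp)), hM⟩

noncomputable def Pext (n : ℕ) (f : ℝ → ℝ) (p : ℝ × ℝ) : ℂ :=
  ∑ l ∈ Finset.range n,
    ((iteratedDeriv l f p.1 : ℝ) : ℂ) * ((Complex.I * (p.2 : ℂ)) ^ l / (l.factorial : ℂ))

noncomputable def cutf (p : ℝ × ℝ) : ℝ := gcut (p.2 ^ 2 / (1 + p.1 ^ 2))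

lemma cutf_contDiff : ContDiff ℝ 1 cutf := by
  unfold cutf
  refine gcut_contDiff.comp ?_
  refine ContDiff.div (by fun_prop) (by fun_prop) ?_
  intro p; positivity

lemma Pext_contDiff (n : ℕ) (f : ℝ → ℝ) (hf : ContDiff ℝ n f) : ContDiff ℝ 1 (Pext n f) := by
  unfold Pext
  refine ContDiff.sum fun l hl => ?_
  have hl' : l + 1 ≤ n := Finset.mem_range.mp hl
  have h1 : ContDiff ℝ 1 (iteratedDeriv l f) :=
    (contDiff_nat_succ_iff_contDiff_one_iteratedDeriv.mp
      (hf.of_le (by exact_mod_cast hl'))).2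
  have h2 : ContDiff ℝ 1 (fun p : ℝ × ℝ => ((iteratedDeriv l f p.1 : ℝ) : ℂ)) :=
    Complex.ofRealCLM.contDiff.comp (h1.comp contDiff_fst)
  have h3 : ContDiff ℝ 1 (fun p : ℝ × ℝ => ((p.2 : ℝ) : ℂ)) :=
    Complex.ofRealCLM.contDiff.comp contDiff_snd
  exact h2.mul (((contDiff_const.mul h3).pow l).div_const _)

lemma Pext_dx (n : ℕ) (f : ℝ → ℝ) (hf : ContDiff ℝ n f) (x y : ℝ) :
    HasDerivAt (fun s : ℝ => Pext n f (s, y))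
      (∑ l ∈ Finset.range n, ((iteratedDeriv (l + 1) f x : ℝ) : ℂ) *
        ((Complex.I * (y : ℂ)) ^ l / (l.factorial : ℂ))) x := by
  unfold Pext
  refine HasDerivAt.fun_sum fun l hl => ?_
  have hl' : l < n := Finset.mem_range.mp hl
  rw [iteratedDeriv_succ]
  exact HasDerivAt.mul_const (HasDerivAt.ofReal_comp (hf.differentiable_iteratedDeriv l (by exact_mod_cast hl') x).hasDerivAt)
    ((Complex.I * (y : ℂ)) ^ l / (l.factorial : ℂ))

lemma Pext_dy (n : ℕ) (f : ℝ → ℝ) (x y : ℝ) :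
    HasDerivAt (fun s : ℝ => Pext n f (x, s))
      (∑ l ∈ Finset.range n, ((iteratedDeriv l f x : ℝ) : ℂ) *
        ((l : ℂ) * (Complex.I * (y : ℂ)) ^ (l - 1) * Complex.I / (l.factorial : ℂ))) y := by
  unfold Pext
  refine HasDerivAt.fun_sum fun l hl => ?_
  have h := ((hasDerivAt_id y).ofReal_comp.const_mul Complex.I).fun_pow l
  simpa using (h.div_const (l.factorial : ℂ)).const_mul ((iteratedDeriv l f x : ℝ) : ℂ)

lemma tele (a : ℕ → ℂ) (w : ℂ) (m : ℕ) :
    (∑ l ∈ Finset.range (m + 1), a (l + 1) * (w ^ l / (l.factorial : ℂ))) +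
      Complex.I * (∑ l ∈ Finset.range (m + 1), a l *
        ((l : ℂ) * w ^ (l - 1) * Complex.I / (l.factorial : ℂ)))
      = a (m + 1) * (w ^ m / (m.factorial : ℂ)) := by
  induction m with
  | zero => simp
  | succ k ih =>
    rw [Finset.sum_range_succ, Finset.sum_range_succ _ (k + 1), mul_add]
    have h1 : ((k + 1).factorial : ℂ) = (k + 1 : ℂ) * (k.factorial : ℂ) := by
      rw [Nat.factorial_succ]; push_cast; ring
    have h2 : (k.factorial : ℂ) ≠ 0 := by exact_mod_cast k.factorial_ne_zero
    have h3 : (k + 1 : ℂ) ≠ 0 := by exact_mod_cast k.succ_ne_zero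
    have h4 : Complex.I * (a (k + 1) *
        (((k + 1 : ℕ) : ℂ) * w ^ (k + 1 - 1) * Complex.I / ((k + 1).factorial : ℂ)))
        = - (a (k + 1) * (w ^ k / (k.factorial : ℂ))) := by
      rw [h1]
      simp only [Nat.add_sub_cancel]
      push_cast
      field_simp
      rw [Complex.I_sq]
      ring
    rw [h4]
    linear_combination ih

lemma cutf_dx (x y : ℝ) : HasDerivAt (fun s : ℝ => ((cutf (s, y) : ℝ) : ℂ))
    ((deriv gcut (y ^ 2 / (1 + x ^ 2)) * (-(y ^ 2 * (2 * x)) / (1 + x ^ 2) ^ 2) : ℝ) : ℂ) x := by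
  refine HasDerivAt.ofReal_comp ?_
  unfold cutf
  have h0 : (1 + x ^ 2) ≠ 0 := by positivity
  have hg := ((gcut_contDiff.differentiable one_ne_zero) (y ^ 2 / (1 + x ^ 2))).hasDerivAt
  have h1 : HasDerivAt (fun s : ℝ => y ^ 2 / (1 + s ^ 2))
      (-(y ^ 2 * (2 * x)) / (1 + x ^ 2) ^ 2) x := by
    have := (hasDerivAt_const x (y ^ 2)).fun_div (((hasDerivAt_id x).fun_pow 2).const_add 1) h0
    simpa using this
  exact HasDerivAt.comp (h₂ := gcut) x hg h1

lemma cutf_dy (x y : ℝ) : HasDerivAt (fun s : ℝ => ((cutf (x, s) : ℝ) : ℂ))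
    ((deriv gcut (y ^ 2 / (1 + x ^ 2)) * (2 * y / (1 + x ^ 2)) : ℝ) : ℂ) y := by
  refine HasDerivAt.ofReal_comp ?_
  unfold cutf
  have hg := ((gcut_contDiff.differentiable one_ne_zero) (y ^ 2 / (1 + x ^ 2))).hasDerivAt
  have h1 : HasDerivAt (fun s : ℝ => s ^ 2 / (1 + x ^ 2)) (2 * y / (1 + x ^ 2)) y := by
    have := ((hasDerivAt_id y).fun_pow 2).div_const (1 + x ^ 2)
    simpa using this
  exact HasDerivAt.comp (h₂ := gcut) y hg h1

lemma CR_formula (m : ℕ) (f : ℝ → ℝ) (hf : ContDiff ℝ (m + 1 : ℕ) f) (x y : ℝ) :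
    CRderiv (fun p => Pext (m + 1) f p * ((cutf p : ℝ) : ℂ)) x y =
      (1 / 2) * (((iteratedDeriv (m + 1) f x : ℝ) : ℂ) *
        ((Complex.I * (y : ℂ)) ^ m / (m.factorial : ℂ)) * ((cutf (x, y) : ℝ) : ℂ)
      + Pext (m + 1) f (x, y) *
        (((deriv gcut (y ^ 2 / (1 + x ^ 2)) * (-(y ^ 2 * (2 * x)) / (1 + x ^ 2) ^ 2) : ℝ) : ℂ)
        + Complex.I * ((deriv gcut (y ^ 2 / (1 + x ^ 2)) * (2 * y / (1 + x ^ 2)) : ℝ) : ℂ))) := by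
  unfold CRderiv
  rw [((Pext_dx (m + 1) f hf x y).fun_mul (cutf_dx x y)).deriv,
    ((Pext_dy (m + 1) f x y).fun_mul (cutf_dy x y)).deriv]
  rw [← tele (fun l => ((iteratedDeriv l f x : ℝ) : ℂ)) (Complex.I * (y : ℂ)) m]
  ring

lemma cut_bound (M : ℝ) (hM0 : 0 ≤ M) (hM : ∀ t ∈ Set.Icc (0 : ℝ) 1, |deriv gcut t| ≤ M)
    (x y : ℝ) (hy : |y| < Real.sqrt (1 + x ^ 2)) :
    ‖((deriv gcut (y ^ 2 / (1 + x ^ 2)) * (-(y ^ 2 * (2 * x)) / (1 + x ^ 2) ^ 2) : ℝ) : ℂ)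
        + Complex.I * ((deriv gcut (y ^ 2 / (1 + x ^ 2)) * (2 * y / (1 + x ^ 2)) : ℝ) : ℂ)‖
      ≤ 4 * M / Real.sqrt (1 + x ^ 2) := by
  set r := Real.sqrt (1 + x ^ 2) with hr
  have hr2 : 1 + x ^ 2 = r ^ 2 := (Real.sq_sqrt (by positivity)).symm
  have hr0 : 0 < r := Real.sqrt_pos.mpr (by positivity)
  have hxr : |x| ≤ r := abs_le_of_sq_le_sq (by linarith) hr0.le
  have hyy : y ^ 2 ≤ r ^ 2 := by rw [← sq_abs y]; gcongr
  have hd : |deriv gcut (y ^ 2 / (1 + x ^ 2))| ≤ M := by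
    apply hM
    refine ⟨by positivity, ?_⟩
    rw [hr2]; exact div_le_one_of_le₀ hyy (by positivity)
  have e1 : |(-(y ^ 2 * (2 * x)) / (1 + x ^ 2) ^ 2)| ≤ 2 / r := by
    rw [hr2, abs_div, abs_neg, abs_mul, abs_mul, abs_of_pos (show (0 : ℝ) < 2 by norm_num),
      abs_of_nonneg (sq_nonneg y), abs_of_pos (show 0 < (r ^ 2) ^ 2 by positivity)]
    rw [div_le_div_iff₀ (by positivity) hr0]
    calc y ^ 2 * (2 * |x|) * r ≤ r ^ 2 * (2 * r) * r := by gcongr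
      _ = 2 * (r ^ 2) ^ 2 := by ring
  have e2 : |2 * y / (1 + x ^ 2)| ≤ 2 / r := by
    rw [hr2, abs_div, abs_mul, abs_of_pos (show (0 : ℝ) < 2 by norm_num),
      abs_of_pos (show 0 < r ^ 2 by positivity)]
    rw [div_le_div_iff₀ (by positivity) hr0]
    calc 2 * |y| * r ≤ 2 * r * r := by gcongr
      _ = 2 * r ^ 2 := by ring
  refine (norm_add_le _ _).trans ?_
  rw [norm_mul, Complex.norm_I, one_mul, Complex.norm_real, Complex.norm_real, Real.norm_eq_abs,
    Real.norm_eq_abs, abs_mul, abs_mul]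
  calc _ ≤ M * (2 / r) + M * (2 / r) := by gcongr
    _ = 4 * M / r := by ring

lemma Pext_norm (n : ℕ) (f : ℝ → ℝ) (x y : ℝ) :
    ‖Pext n f (x, y)‖ ≤ ∑ l ∈ Finset.range n, |iteratedDeriv l f x| * |y| ^ l := by
  unfold Pext
  refine (norm_sum_le _ _).trans (Finset.sum_le_sum fun l _ => ?_)
  rw [norm_mul, Complex.norm_real, norm_div, norm_pow, norm_mul, Complex.norm_I, one_mul,
    Complex.norm_real, Real.norm_eq_abs, Real.norm_eq_abs, Complex.norm_natCast]
  have : (1 : ℝ) ≤ (l.factorial : ℝ) := by exact_mod_cast l.factorial_pos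
  gcongr
  exact div_le_self (by positivity) this

lemma main_bound (m : ℕ) (M : ℝ) (hM0 : 0 ≤ M)
    (hM : ∀ t ∈ Set.Icc (0 : ℝ) 1, |deriv gcut t| ≤ M)
    (f : ℝ → ℝ) (hf : ContDiff ℝ (m + 1 : ℕ) f) (x y : ℝ) (hy : |y| < Real.sqrt (1 + x ^ 2)) :
    ‖CRderiv (fun p => Pext (m + 1) f p * ((cutf p : ℝ) : ℂ)) x y‖ ≤
      (1 + 4 * M * 2 ^ m) * Fweight (m + 1) f x * |y| ^ m := by
  rw [CR_formula m f hf]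
  have hcb := cut_bound M hM0 hM x y hy
  have hz : y ^ 2 / (1 + x ^ 2) < 1 / 2 → 
    ((deriv gcut (y ^ 2 / (1 + x ^ 2)) * (-(y ^ 2 * (2 * x)) / (1 + x ^ 2) ^ 2) : ℝ) : ℂ)
        + Complex.I * ((deriv gcut (y ^ 2 / (1 + x ^ 2)) * (2 * y / (1 + x ^ 2)) : ℝ) : ℂ) = 0 := by
    intro h; rw [gcut_deriv_zero h]; simp
  set D := ((deriv gcut (y ^ 2 / (1 + x ^ 2)) * (-(y ^ 2 * (2 * x)) / (1 + x ^ 2) ^ 2) : ℝ) : ℂ)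
        + Complex.I * ((deriv gcut (y ^ 2 / (1 + x ^ 2)) * (2 * y / (1 + x ^ 2)) : ℝ) : ℂ) with hD
  clear_value D
  have hP := Pext_norm (m + 1) f x y
  unfold Fweight
  set r := Real.sqrt (1 + x ^ 2) with hr
  have hr2 : 1 + x ^ 2 = r ^ 2 := (Real.sq_sqrt (by positivity)).symm
  have hr0 : 0 < r := Real.sqrt_pos.mpr (by positivity)
  set S := ∑ l ∈ Finset.range (m + 1), |iteratedDeriv l f x| * r ^ ((l : ℤ) - ((m + 1 : ℕ) : ℤ))
    with hS
  have hS0 : 0 ≤ S := Finset.sum_nonneg fun l _ => by positivity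
  rw [Finset.sum_range_succ, sub_self, zpow_zero, mul_one, ← hS]
  have A1 : ‖((iteratedDeriv (m + 1) f x : ℝ) : ℂ) *
        ((Complex.I * (y : ℂ)) ^ m / (m.factorial : ℂ)) * ((cutf (x, y) : ℝ) : ℂ)‖
      ≤ |iteratedDeriv (m + 1) f x| * |y| ^ m := by
    rw [norm_mul, norm_mul, Complex.norm_real, norm_div, norm_pow, norm_mul, Complex.norm_I,
      one_mul, Complex.norm_real, Complex.norm_real, Real.norm_eq_abs, Real.norm_eq_abs,
      Complex.norm_natCast, Real.norm_eq_abs]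
    have h1 : (1 : ℝ) ≤ (m.factorial : ℝ) := by exact_mod_cast m.factorial_pos
    have h2 : |y| ^ m / (m.factorial : ℝ) ≤ |y| ^ m := div_le_self (by positivity) h1
    have h3 : |cutf (x, y)| ≤ 1 := gcut_abs_le _
    calc _ ≤ |iteratedDeriv (m + 1) f x| * |y| ^ m * 1 := by gcongr
      _ = _ := mul_one _
  have A2 : ‖Pext (m + 1) f (x, y) * D‖ ≤ 4 * M * 2 ^ m * S * |y| ^ m := by
    by_cases h : y ^ 2 / (1 + x ^ 2) < 1 / 2
    · rw [hz h, mul_zero, norm_zero]; positivity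
    · have hry : r ≤ 2 * |y| := by
        rw [not_lt, hr2, div_le_div_iff₀ (by norm_num) (by positivity)] at h
        refine (sq_le_sq₀ hr0.le (by positivity)).mp ?_
        rw [mul_pow, sq_abs]; nlinarith [sq_nonneg y]
      rw [norm_mul]
      have hb : ∑ l ∈ Finset.range (m + 1), |iteratedDeriv l f x| * |y| ^ l
          ≤ S * (r * (2 ^ m * |y| ^ m)) := by
        rw [hS, Finset.sum_mul]
        refine Finset.sum_le_sum fun l _ => ?_
        rw [mul_assoc]
        gcongr
        have e : r ^ ((l : ℤ) - ((m + 1 : ℕ) : ℤ)) * (r * r ^ m) = r ^ l := by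
          rw [zpow_sub₀ hr0.ne', zpow_natCast, zpow_natCast]
          field_simp
          ring
        calc |y| ^ l ≤ r ^ l := by gcongr
          _ = r ^ ((l : ℤ) - ((m + 1 : ℕ) : ℤ)) * (r * r ^ m) := e.symm
          _ ≤ r ^ ((l : ℤ) - ((m + 1 : ℕ) : ℤ)) * (r * (2 * |y|) ^ m) := by gcongr
          _ = _ := by rw [mul_pow]
      calc _ ≤ (S * (r * (2 ^ m * |y| ^ m))) * (4 * M / r) := by
            gcongr
            exact hP.trans hb
        _ = _ := by field_simp
  rw [norm_mul]
  have hh : ‖(1 / 2 : ℂ)‖ ≤ 1 := by norm_num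
  have hT : 0 ≤ |iteratedDeriv (m + 1) f x| := abs_nonneg _
  set T := |iteratedDeriv (m + 1) f x|
  have hy0 : 0 ≤ |y| ^ m := by positivity
  calc _ ≤ 1 * (T * |y| ^ m + 4 * M * 2 ^ m * S * |y| ^ m) := by
        gcongr
        exact (norm_add_le _ _).trans (add_le_add A1 A2)
    _ ≤ _ := by
      have : 0 ≤ S * |y| ^ m + 4 * M * 2 ^ m * T * |y| ^ m := by positivity
      nlinarith

lemma cutf_zero {x y : ℝ} (h : Real.sqrt (1 + x ^ 2) < |y|) : cutf (x, y) = 0 := by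
  apply gcut_zero
  rw [one_le_div (by positivity)]
  have := Real.lt_sq_of_sqrt_lt h
  rw [sq_abs] at this
  exact this.le

theorem quasi_analytic_extension (n : ℕ) (hn : 2 ≤ n) :
    ∃ C : ℝ, ∀ f : ℝ → ℝ, ContDiff ℝ n f →
      ∃ ft : ℝ × ℝ → ℂ, ContDiff ℝ 1 ft ∧
        (∀ x : ℝ, ft (x, 0) = (f x : ℂ)) ∧
        (∀ x y : ℝ, Real.sqrt (1 + x ^ 2) < |y| → ft (x, y) = 0) ∧
        (∀ x y : ℝ, |y| < Real.sqrt (1 + x ^ 2) →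
          ‖CRderiv ft x y‖ ≤ C * Fweight n f x * |y| ^ (n - 1)) ∧
        (∀ x y : ℝ, Real.sqrt (1 + x ^ 2) < |y| → CRderiv ft x y = 0) := by
  obtain ⟨m, rfl⟩ : ∃ m, n = m + 1 := ⟨n - 1, by omega⟩
  obtain ⟨M, hM0, hM⟩ := gcut_deriv_bdd
  refine ⟨1 + 4 * M * 2 ^ m, fun f hf => ?_⟩
  refine ⟨fun p => Pext (m + 1) f p * ((cutf p : ℝ) : ℂ), ?_, ?_, ?_, ?_, ?_⟩
  · exact (Pext_contDiff _ f hf).mul (Complex.ofRealCLM.contDiff.comp cutf_contDiff)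
  · intro x
    have h1 : cutf (x, 0) = 1 := by unfold cutf; exact gcut_one (by simp)
    simp [h1, Pext, Finset.sum_range_succ']
  · intro x y h
    simp [cutf_zero h]
  · intro x y h
    exact main_bound m M hM0 hM f hf x y h
  · intro x y h
    unfold CRderiv
    have h1 : (fun s : ℝ => Pext (m + 1) f (s, y) * ((cutf (s, y) : ℝ) : ℂ))
        =ᶠ[nhds x] fun _ => 0 := by
      have hc : Continuous fun s : ℝ => Real.sqrt (1 + s ^ 2) := by fun_prop
      filter_upwards [hc.continuousAt.eventually_lt_const h] with s hs
      simp [cutf_zero hs]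
    have h2 : (fun s : ℝ => Pext (m + 1) f (x, s) * ((cutf (x, s) : ℝ) : ℂ))
        =ᶠ[nhds y] fun _ => 0 := by
      filter_upwards [continuous_abs.continuousAt.eventually_const_lt h] with s hs
      simp [cutf_zero hs]
    rw [h1.deriv_eq, h2.deriv_eq]
    simp
end
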